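/- Let p be an odd prime, let n ≥ p be an integer, and let k be an algebraically closed field of characteristic p. Then there exists a finite Galois field extension L of the rational function field k(X) whose Galois group is isomorphic to the alternating group A_n, such that every nonzero prime ideal of the polynomial ring k[X] is unramified in L; that is, for every nonzero prime ideal P of k[X] and every prime ideal Q of the integral closure B of k[X] in L lying over P, the ramification index of Q over P equals 1. -/

import Mathlib

open Polynomial

theorem lemmaW {k B : Type*} [Field k] [CommRing B] [IsDomain B] [Algebra k B] (ρ : B →ₐ[k] k)
    {h U g : k[X]} {a : k} {m q : ℕ} (hm : (m : k) ≠ 0) (hq : q ≠ 0)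
    (hU : h = (X - C a) ^ m * U) (hUa : U.eval a ≠ 0) (hga : g.eval a ≠ 0)
    {z r r' w w' : B} (hz0 : z ≠ 0) (hz : ρ z = 0) (hr : ρ r = a) (hr' : ρ r' = a)
    (hrz : aeval r h = z ^ (m * q) * aeval r g) (hrz' : aeval r' h = z ^ (m * q) * aeval r' g)
    (hw : w * z ^ q = aeval r U * (r - algebraMap k B a))
    (hw' : w' * z ^ q = aeval r' U * (r' - algebraMap k B a))
    (hww : ρ w = ρ w') : r = r' := by
  have hm1 : m ≠ 0 := by rintro rfl; simp at hm
  obtain ⟨M, rfl⟩ : ∃ M, m = M + 1 := Nat.exists_eq_succ_of_ne_zero hm1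
  have key : ∀ r w : B, aeval r h = z ^ ((M+1) * q) * aeval r g →
      w * z ^ q = aeval r U * (r - algebraMap k B a) → w ^ (M+1) = aeval r (U ^ M * g) := by
    intro r w h1 h2
    have h3 : z ^ ((M+1) * q) ≠ 0 := pow_ne_zero _ hz0
    apply mul_right_cancel₀ h3
    have : (w * z ^ q) ^ (M+1) = (aeval r U * (r - algebraMap k B a)) ^ (M+1) := by rw [h2]
    rw [mul_pow, ← pow_mul, mul_comm q] at this
    rw [this]
    rw [hU] at h1
    simp only [map_mul, map_pow, map_sub, aeval_X, aeval_C] at h1 ⊢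
    rw [mul_pow, pow_succ (aeval r U)]
    linear_combination (aeval r U) ^ M * h1
  have k1 := key r w hrz hw
  have k2 := key r' w' hrz' hw'
  have ρaeval : ∀ (f : k[X]) (b : B), ρ (aeval b f) = f.eval (ρ b) := by
    intro f b
    rw [← Polynomial.aeval_algHom_apply, coe_aeval_eq_eval]
  have hw0 : ρ w ^ (M+1) ≠ 0 := by
    rw [← map_pow, k1, ρaeval, hr]; simp [hUa, hga]
  have hw00 : ρ w ≠ 0 := fun h => hw0 (by simp [h])
  -- factorizations
  have hd : ∀ f : k[X], ∃ ψ : B, aeval r f - aeval r' f = (r - r') * ψ := by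
    intro f
    obtain ⟨ψ, hψ⟩ := (f.map (algebraMap k B)).evalSubFactor r r'
    refine ⟨ψ, ?_⟩
    rw [mul_comm, ← hψ]
    simp [eval_map_algebraMap]
  obtain ⟨ψ0, hψ0⟩ := hd U
  obtain ⟨χ, hχ⟩ := hd (U ^ M * g)
  set S := ∑ i ∈ Finset.range (M+1), w ^ i * w' ^ (M - i) with hS
  have hS1 : (w - w') * S = w ^ (M+1) - w' ^ (M+1) := by
    rw [mul_comm]
    have := Commute.geom_sum₂_mul (Commute.all w w') (M+1)
    simpa using this
  set ψ := aeval r U + ψ0 * (r' - algebraMap k B a)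
  have hψ : (w - w') * z ^ q = (r - r') * ψ := by
    rw [sub_mul, hw, hw']
    simp only [ψ]
    linear_combination (r' - algebraMap k B a) * hψ0
  have hS2 : (w - w') * S = (r - r') * χ := by rw [hS1, k1, k2, hχ]
  have h0 : (r - r') * (S * ψ - z ^ q * χ) = 0 := by
    linear_combination z ^ q * hS2 - S * hψ
  rcases mul_eq_zero.mp h0 with h | h
  · exact sub_eq_zero.mp h
  exfalso
  have h2 := congrArg ρ h
  have ρS : ρ S = (M+1 : ℕ) * ρ w ^ M := by
    rw [hS, map_sum]
    rw [Finset.sum_congr rfl (g := fun _ => ρ w ^ M)]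
    · simp
    · intro i hi
      rw [map_mul, map_pow, map_pow, ← hww, ← pow_add]
      congr 1
      have := Finset.mem_range.mp hi
      omega
  simp only [map_sub, map_mul, map_pow, hz, zero_pow hq, zero_mul, sub_zero, map_zero, ρS, ψ, map_add, ρaeval, hr, hr', AlgHom.commutes] at h2
  simp [hUa, hw00] at h2
  exact hm (by exact_mod_cast h2)

theorem twist_fix {k B : Type*} [Field k] [CommRing B] [IsDomain B] [Algebra k B] (ρ : B →ₐ[k] k)
    (s : B →ₐ[k] B) (hs : ∀ b, ρ (s b) = ρ b)
    {h U g : k[X]} {a : k} {m q : ℕ} (hm : (m : k) ≠ 0) (hq : q ≠ 0)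
    (hU : h = (X - C a) ^ m * U) (hUa : U.eval a ≠ 0) (hga : g.eval a ≠ 0)
    {z r w : B} (hz0 : z ≠ 0) (hz : ρ z = 0) (hr : ρ r = a)
    (hrz : aeval r h = z ^ (m * q) * aeval r g)
    (hw : w * z ^ q = aeval r U * (r - algebraMap k B a))
    {ζ : k} (hζ : ζ ^ (m * q) = 1) (hsz : s z = algebraMap k B ζ * z) :
    s r = r ↔ ζ ^ q = 1 := by
  have hm1 : m ≠ 0 := by rintro rfl; simp at hm
  have sa : ∀ (f : k[X]), aeval (s r) f = s (aeval r f) := fun f => aeval_algHom_apply s r f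
  have h1 : aeval (s r) h = z ^ (m * q) * aeval (s r) g := by
    rw [sa, sa, hrz, map_mul, map_pow, hsz, mul_pow, ← map_pow, hζ, map_one, one_mul]
  have h2 : (algebraMap k B (ζ ^ q) * s w) * z ^ q = aeval (s r) U * (s r - algebraMap k B a) := by
    have := congrArg s hw
    rw [map_mul, map_pow, hsz, map_mul, map_sub, AlgHom.commutes, mul_pow, ← map_pow] at this
    rw [sa, ← this]; ring
  constructor
  · intro h3
    rw [h3, ← hw] at h2
    have h4 := mul_right_cancel₀ (pow_ne_zero q hz0) h2
    have h5 := congrArg ρ h4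
    rw [map_mul, AlgHom.commutes, hs] at h5
    have ρaeval : ∀ (f : k[X]) (b : B), ρ (aeval b f) = f.eval (ρ b) := by
      intro f b
      rw [← Polynomial.aeval_algHom_apply, coe_aeval_eq_eval]
    have hw0 : ρ w ≠ 0 := by
      intro hw0
      obtain ⟨M, rfl⟩ : ∃ M, m = M + 1 := Nat.exists_eq_succ_of_ne_zero hm1
      have k1 : w ^ (M+1) = aeval r (U ^ M * g) := by
        have h3 : z ^ ((M+1) * q) ≠ 0 := pow_ne_zero _ hz0
        apply mul_right_cancel₀ h3
        have : (w * z ^ q) ^ (M+1) = (aeval r U * (r - algebraMap k B a)) ^ (M+1) := by rw [hw]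
        rw [mul_pow, ← pow_mul, mul_comm q] at this
        rw [this]
        rw [hU] at hrz
        simp only [map_mul, map_pow, map_sub, aeval_X, aeval_C] at hrz ⊢
        rw [mul_pow, pow_succ (aeval r U)]
        linear_combination (aeval r U) ^ M * hrz
      have := congrArg ρ k1
      rw [map_pow, hw0, ρaeval, hr] at this
      simp [hUa, hga] at this
    have h6 : (ζ ^ q - 1) * ρ w = 0 := by
      simp only [Algebra.algebraMap_self, RingHom.id_apply] at h5
      rw [sub_mul, h5]; ring
    rcases mul_eq_zero.mp h6 with h | h
    · exact sub_eq_zero.mp h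
    · exact absurd h hw0
  · intro h3
    refine (lemmaW ρ hm hq hU hUa hga hz0 hz hr (by rw [hs, hr]) hrz h1 hw h2 ?_).symm
    rw [h3, map_one, one_mul, hs]

theorem exists_w {k B L : Type*} [Field k] [CommRing B] [IsDomain B] [Algebra k B] [Field L]
    [Algebra k L] [Algebra B L] [IsScalarTower k B L]
    (hinj : Function.Injective (algebraMap B L)) 
    (hic : ∀ (m : ℕ) (y : L) (b : B), m ≠ 0 → y ^ m = algebraMap B L b → ∃ w, algebraMap B L w = y)
    {h U g : k[X]} {a : k} {m q : ℕ} (hm : m ≠ 0)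
    (hU : h = (X - C a) ^ m * U)
    {z r : B} (hz0 : z ≠ 0) 
    (hrz : aeval r h = z ^ (m * q) * aeval r g) :
    ∃ w : B, w * z ^ q = aeval r U * (r - algebraMap k B a) := by
  obtain ⟨M, rfl⟩ : ∃ M, m = M + 1 := Nat.exists_eq_succ_of_ne_zero hm
  have hz1 : algebraMap B L z ≠ 0 := by
    rwa [Ne, map_eq_zero_iff _ hinj]
  obtain ⟨w, hw⟩ := hic (M+1) (algebraMap B L (aeval r U * (r - algebraMap k B a)) / (algebraMap B L z) ^ q)
    (aeval r (U ^ M * g)) hm (by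
      rw [div_pow, div_eq_iff (by positivity), ← map_pow, ← pow_mul, ← map_pow, ← map_mul]
      congr 1
      rw [hU] at hrz
      simp only [map_mul, map_pow, map_sub, aeval_X, aeval_C] at hrz ⊢
      rw [mul_pow, pow_succ (aeval r U), mul_comm q]
      linear_combination (aeval r U) ^ M * hrz)
  refine ⟨w, hinj ?_⟩
  rw [map_mul, map_pow, hw, div_mul_cancel₀ _ (pow_ne_zero _ hz1)]

open Polynomial
section
variable {k : Type} [Field k] [IsAlgClosed k] {L : Type} [Field L] [Algebra k L] [Algebra k[X] L] [Algebra (RatFunc k) L] [IsScalarTower k k[X] L] [IsScalarTower k[X] (RatFunc k) L] [FiniteDimensional (RatFunc k) L] [IsGalois (RatFunc k) L]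

theorem place_exists (Q : Ideal (integralClosure k[X] L)) [hQ : Q.IsPrime] 
    (hP : Q.comap (algebraMap (Polynomial k) (integralClosure (Polynomial k) L)) ≠ ⊥) :
    ∃ ρ : integralClosure k[X] L →ₐ[k] k, RingHom.ker ρ = Q := by
  have hPp : (Q.comap (algebraMap (Polynomial k) (integralClosure (Polynomial k) L))).IsPrime := Ideal.IsPrime.comap _
  have hPm := hPp.isMaximal hP
  have : Algebra.IsIntegral k[X] (integralClosure k[X] L) := inferInstance
  have hQm : Q.IsMaximal := Ideal.isMaximal_of_isIntegral_of_isMaximal_comap Q hPm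
  let _ := Ideal.Quotient.field Q
  set P := Q.comap (algebraMap (Polynomial k) (integralClosure (Polynomial k) L)) with hPdef
  obtain ⟨f, hf⟩ := IsPrincipalIdealRing.principal P
  have hf0 : f ≠ 0 := by
    rintro rfl; apply hP; rw [hf]; simp
  have hfP : f ∈ P := by rw [hf]; exact Ideal.mem_span_singleton_self f
  have hfdeg : f.degree ≠ 0 := by
    intro h
    apply hPp.ne_top
    exact Ideal.eq_top_of_isUnit_mem _ hfP (Polynomial.isUnit_iff_degree_eq_zero.mpr h)
  obtain ⟨c, hc⟩ := IsAlgClosed.exists_root f hfdeg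
  have hXc : (X - C c : k[X]) ∈ P := by
    rw [hf]
    have hirr : Prime f := by
      rw [← Ideal.span_singleton_prime hf0]
      rw [hf] at hPp; exact hPp
    have h1 := dvd_iff_isRoot.mpr hc
    exact Ideal.mem_span_singleton.mpr (Irreducible.dvd_symm (irreducible_X_sub_C c) hirr.irreducible h1)
  -- the quotient is integral over k
  have hint : Algebra.IsIntegral k (integralClosure k[X] L ⧸ Q) := by
    constructor
    intro y
    obtain ⟨b, rfl⟩ := Ideal.Quotient.mk_surjective y
    obtain ⟨q, hq, hq0⟩ := Algebra.IsIntegral.isIntegral (R := k[X]) b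
    refine ⟨q.map (evalRingHom c), hq.map _, ?_⟩
    have h2 : (Ideal.Quotient.mk Q).comp (algebraMap k[X] (integralClosure k[X] L)) =
        (algebraMap k (integralClosure k[X] L ⧸ Q)).comp (evalRingHom c) := by
      apply Polynomial.ringHom_ext
      · intro a
        simp only [RingHom.comp_apply, coe_evalRingHom, eval_C]
        rw [IsScalarTower.algebraMap_apply k (integralClosure k[X] L) (integralClosure k[X] L ⧸ Q),
          IsScalarTower.algebraMap_apply k k[X] (integralClosure k[X] L)]
        rfl
      · simp only [RingHom.comp_apply, coe_evalRingHom, eval_X]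
        rw [IsScalarTower.algebraMap_apply k (integralClosure k[X] L) (integralClosure k[X] L ⧸ Q),
          IsScalarTower.algebraMap_apply k k[X] (integralClosure k[X] L)]
        refine Ideal.Quotient.eq.mpr ?_
        rw [← map_sub]
        exact hXc
    rw [eval₂_map, ← h2, ← hom_eval₂, hq0, map_zero]
  have hbij : Function.Bijective (algebraMap k (integralClosure k[X] L ⧸ Q)) :=
    IsAlgClosed.algebraMap_bijective_of_isIntegral
  let E : k ≃ₐ[k] (integralClosure k[X] L ⧸ Q) := AlgEquiv.ofBijective (Algebra.ofId _ _) hbij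
  refine ⟨(E.symm : _ →ₐ[k] k).comp (Ideal.Quotient.mkₐ k Q), ?_⟩
  ext b
  simp [RingHom.mem_ker, Ideal.Quotient.eq_zero_iff_mem]

theorem instInv : Algebra.IsInvariant (k[X]) (integralClosure k[X] L) (L ≃ₐ[RatFunc k] L) := by
  constructor
  intro b hb
  have h1 : (b : L) ∈ Set.range (algebraMap (RatFunc k) L) := by
    rw [IsGalois.mem_range_algebraMap_iff_fixed]
    intro σ
    have := congrArg Subtype.val (hb σ)
    exact this
  obtain ⟨y, hy⟩ := h1
  have : IsIntegral k[X] y := by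
    have h2 : IsIntegral k[X] (algebraMap (RatFunc k) L y) := hy ▸ b.2
    exact (isIntegral_algebraMap_iff (algebraMap (RatFunc k) L).injective).mp h2
  obtain ⟨q, rfl⟩ := IsIntegrallyClosed.isIntegral_iff.mp this
  refine ⟨q, Subtype.ext ?_⟩
  rw [← hy, ← IsScalarTower.algebraMap_apply k[X] (RatFunc k) L]
  rfl

theorem place_conj (ρ ρ' : integralClosure k[X] L →ₐ[k] k)
    (h : ρ (algebraMap k[X] _ X) = ρ' (algebraMap k[X] _ X)) :
    ∃ η : L ≃ₐ[RatFunc k] L, ∀ b, ρ' (η • b) = ρ b := by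
  have := instInv (k := k) (L := L)
  have hu : ∀ q : k[X], ρ (algebraMap k[X] _ q) = ρ' (algebraMap k[X] _ q) := by
    intro q
    have : (ρ : integralClosure k[X] L →+* k).comp (algebraMap k[X] _) = (ρ' : integralClosure k[X] L →+* k).comp (algebraMap k[X] _) := by
      apply Polynomial.ringHom_ext
      · intro a
        have := ρ.commutes a
        have := ρ'.commutes a
        simp_all [IsScalarTower.algebraMap_apply k k[X] (integralClosure k[X] L)]
      · exact h
    exact congrArg (fun f => f q) this
  have hk1 : (RingHom.ker ρ).IsPrime := RingHom.ker_isPrime (ρ : integralClosure k[X] L →+* k)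
  have hk2 : (RingHom.ker ρ').IsPrime := RingHom.ker_isPrime (ρ' : integralClosure k[X] L →+* k)
  obtain ⟨η, hη⟩ := Algebra.IsInvariant.exists_smul_of_under_eq k[X] (integralClosure k[X] L) (L ≃ₐ[RatFunc k] L)
    (RingHom.ker ρ) (RingHom.ker ρ') (by ext q; simp [Ideal.under, RingHom.mem_ker, hu])
  refine ⟨η, fun b => ?_⟩
  have h1 : b - algebraMap k _ (ρ b) ∈ RingHom.ker ρ := by simp [RingHom.mem_ker]
  have h2 := Ideal.smul_mem_pointwise_smul η _ _ h1
  rw [← hη, smul_sub, RingHom.mem_ker, map_sub] at h2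
  have h3 : η • (algebraMap k (integralClosure k[X] L) (ρ b)) = algebraMap k _ (ρ b) := by
    rw [IsScalarTower.algebraMap_apply k k[X] (integralClosure k[X] L)]
    exact smul_algebraMap η _
  rw [h3] at h2
  simpa [sub_eq_zero] using h2

theorem unram_of_inertia (P : Ideal k[X]) (hP : P.IsPrime) (hP0 : P ≠ ⊥)
    (Q : Ideal (integralClosure k[X] L)) (hQ : Q.IsPrime) 
    (hQP : Q.comap (algebraMap (Polynomial k) (integralClosure (Polynomial k) L)) = P)
    (hI : ∀ σ : L ≃ₐ[RatFunc k] L, (∀ b : integralClosure k[X] L, σ • b - b ∈ Q) → σ = 1) :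
    Ideal.ramificationIdx' P Q = 1 := by
  have := instInv (k := k) (L := L)
  have : IsDedekindDomain (integralClosure k[X] L) := integralClosure.isDedekindDomain k[X] (RatFunc k) L
  have : IsFractionRing (integralClosure k[X] L) L := integralClosure.isFractionRing_of_finite_extension (RatFunc k) L
  have : Module.Finite k[X] (integralClosure k[X] L) := IsIntegralClosure.finite k[X] (RatFunc k) L _
  have : FaithfulSMul k[X] (integralClosure k[X] L) := by
    rw [faithfulSMul_iff_algebraMap_injective]
    have h1 : Function.Injective (algebraMap k[X] L) := by
      rw [IsScalarTower.algebraMap_eq k[X] (RatFunc k) L]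
      exact (algebraMap (RatFunc k) L).injective.comp (IsFractionRing.injective k[X] (RatFunc k))
    exact fun a b hab => h1 (congrArg Subtype.val hab)
  have : Module.IsTorsionFree k[X] (integralClosure k[X] L) := inferInstance
  have : FaithfulSMul (L ≃ₐ[RatFunc k] L) (integralClosure k[X] L) := by
    constructor
    intro σ τ h
    ext y
    obtain ⟨a, b, hb, rfl⟩ := IsFractionRing.div_surjective (integralClosure k[X] L) y
    rw [map_div₀, map_div₀]
    have ha := congrArg Subtype.val (h a)
    have hb := congrArg Subtype.val (h b)
    exact congrArg₂ (· / ·) ha hb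
  have : IsGaloisGroup (L ≃ₐ[RatFunc k] L) (k[X]) (integralClosure k[X] L) := ⟨inferInstance, inferInstance, inferInstance⟩
  have hlo : Q.LiesOver P := ⟨hQP.symm⟩
  have : PerfectField P.ResidueField := by
    have hPm := hP.isMaximal hP0
    obtain ⟨f, hf⟩ := IsPrincipalIdealRing.principal P
    have hf0 : f ≠ 0 := by
      rintro rfl; apply hP0; rw [hf]; simp
    have hint : Algebra.IsIntegral k (k[X] ⧸ P) := by
      constructor
      intro y
      obtain ⟨b, rfl⟩ := Ideal.Quotient.mk_surjective y
      have hX : IsIntegral k (Ideal.Quotient.mkₐ k P X) := by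
        refine ⟨f * C f.leadingCoeff⁻¹, monic_mul_leadingCoeff_inv hf0, ?_⟩
        have h3 : eval₂ (algebraMap k (k[X] ⧸ P)) (Ideal.Quotient.mkₐ k P X) f = 0 := by
          change aeval (Ideal.Quotient.mkₐ k P X) f = 0
          rw [aeval_algHom_apply, aeval_X_left_apply]
          apply Ideal.Quotient.eq_zero_iff_mem.mpr
          rw [hf]; exact Ideal.mem_span_singleton_self f
        rw [eval₂_mul, h3, zero_mul]
      have h4 : IsIntegral k (aeval (Ideal.Quotient.mkₐ k P X) b) := by
        rw [aeval_eq_sum_range]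
        exact IsIntegral.sum _ fun i _ => (hX.pow i).smul _
      rwa [aeval_algHom_apply, aeval_X_left_apply] at h4
    have hb := Ideal.bijective_algebraMap_quotient_residueField P
    have : Algebra.IsAlgebraic k P.ResidueField := by
      constructor
      intro y
      obtain ⟨b, rfl⟩ := hb.2 y
      exact ((Algebra.IsIntegral.isIntegral (R := k) b).map (IsScalarTower.toAlgHom k (k[X] ⧸ P) P.ResidueField)).isAlgebraic
    exact Algebra.IsAlgebraic.perfectField k
  have hflat : Module.Flat k[X] (integralClosure k[X] L) := by
    have : Module.Free k[X] (integralClosure k[X] L) := inferInstance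
    infer_instance
  rw [Ideal.ramificationIdx'_eq_ramificationIdx P Q hP0, ← Ideal.ramificationIdxIn_eq_ramificationIdx P Q (L ≃ₐ[RatFunc k] L),
    ← Ideal.card_inertia_eq_ramificationIdxIn (G := L ≃ₐ[RatFunc k] L) P Q]
  rw [Subgroup.card_eq_one, eq_bot_iff]
  intro σ hσ
  exact hI σ hσ
end

open Polynomial
set_option linter.unusedSectionVars false

structure Pack (k : Type) [Field k] (h g : k[X]) (e : ℕ) : Prop where
  monic : h.Monic
  cop : IsCoprime h g
  deg : g.natDegree < h.natDegree
  wr : ∀ b : k, g.eval b ≠ 0 → (derivative h * g - h * derivative g).eval b = 0 → h.eval b = 0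
  e0 : (e : k) ≠ 0
  even : Even e
  dvd : ∀ a : k, h.eval a = 0 → h.rootMultiplicity a ∣ e

namespace Pack
variable {k : Type} [Field k] {h g : k[X]} {e : ℕ}

theorem g_ne (hP : Pack k h g e) {b : k} (hb : h.eval b = 0) : g.eval b ≠ 0 := by
  intro hg
  obtain ⟨u, v, huv⟩ := hP.cop
  have := congrArg (eval b) huv
  simp [hb, hg] at this

theorem sep [IsAlgClosed k] (hP : Pack k h g e) {c : k} (hc : c ≠ 0) : (h - C c * g).Separable := by
  rw [separable_def]
  by_contra hcop
  have : ¬ IsCoprime (h - C c * g) (derivative (h - C c * g)) := hcop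
  rw [Polynomial.isCoprime_iff_aeval_ne_zero_of_isAlgClosed k k] at this
  push Not at this
  obtain ⟨b, h1, h2⟩ := this
  simp only [coe_aeval_eq_eval, derivative_sub, derivative_mul, derivative_C, zero_mul, zero_add, eval_sub, eval_mul, eval_C] at h1 h2
  have h3 : h.eval b = 0 := by
    by_cases hgb : g.eval b = 0
    · rw [hgb, mul_zero, sub_zero] at h1; exact h1
    apply hP.wr b hgb
    simp only [eval_sub, eval_mul]
    linear_combination g.eval b * h2 - (derivative g).eval b * h1
  have h4 : g.eval b = 0 := by
    rw [h3] at h1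
    simpa [hc] using h1
  exact hP.g_ne h3 h4

theorem e_ne (hP : Pack k h g e) : e ≠ 0 := by
  rintro rfl; exact hP.e0 (by simp)

theorem two_ne (hP : Pack k h g e) : (2 : k) ≠ 0 := by
  obtain ⟨j, hj⟩ := hP.even
  intro h2
  apply hP.e0
  rw [hj]; push_cast
  rw [← two_mul, h2, zero_mul]
end Pack

section
variable {k : Type} [Field k] [IsAlgClosed k] {L : Type} [Field L] [Algebra k L] [Algebra k[X] L] [Algebra (RatFunc k) L] [IsScalarTower k k[X] L] [IsScalarTower k[X] (RatFunc k) L] [FiniteDimensional (RatFunc k) L] [IsGalois (RatFunc k) L]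
variable {h g : k[X]} {e n : ℕ} 

/-- roots system in a field -/
def RootSys {k L : Type} [Field k] [Field L] [Algebra k L] (h g : k[X]) (e : ℕ) (z : L) {n : ℕ} (r : Fin n → L) : Prop :=
  h.map (algebraMap k L) - C (z ^ e) * g.map (algebraMap k L) = ∏ i, (X - C (r i))

theorem RootSys.root {k L : Type} [Field k] [Field L] [Algebra k L] {h g : k[X]} {e : ℕ} {z : L} {n : ℕ} {r : Fin n → L}
    (H : RootSys h g e z r) (i : Fin n) : aeval (r i) h = z ^ e * aeval (r i) g := by
  have := congrArg (eval (r i)) H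
  rw [eval_prod, Finset.prod_eq_zero (Finset.mem_univ i) (by simp)] at this
  simp only [eval_sub, eval_mul, eval_C, eval_map_algebraMap] at this
  exact sub_eq_zero.mp this

theorem RootSys.perm {k L : Type} [Field k] [Field L] [Algebra k L] {h g : k[X]} {e : ℕ} {z : L} {n : ℕ} {r : Fin n → L}
    (H : RootSys h g e z r) (hr : Function.Injective r) (σ : L →ₐ[k] L) (hσ : σ (z ^ e) = z ^ e) :
    ∃ π : Equiv.Perm (Fin n), ∀ i, σ (r i) = r (π i) := by
  have h1 : ∀ i, ∃ j, σ (r i) = r j := by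
    intro i
    have h2 := congrArg σ (H.root i)
    rw [map_mul, hσ, ← aeval_algHom_apply, ← aeval_algHom_apply] at h2
    have := congrArg (eval (σ (r i))) H
    rw [eval_prod] at this
    simp only [eval_sub, eval_mul, eval_C, eval_map_algebraMap, h2, sub_self, eval_X] at this
    obtain ⟨j, -, hj⟩ := Finset.prod_eq_zero_iff.mp this.symm
    exact ⟨j, sub_eq_zero.mp hj⟩
  choose f hf using h1
  have hfi : Function.Injective f := by
    intro i j hij
    apply hr; apply σ.injective
    change σ (r i) = σ (r j)
    rw [hf, hf, hij]
  exact ⟨Equiv.ofBijective f (Finite.injective_iff_bijective.mp hfi), hf⟩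

theorem RootSys.integral {r : Fin n → L} (hP : Pack k h g e) (H : RootSys h g e (algebraMap k[X] L X) r) :
    ∃ rB : Fin n → integralClosure k[X] L, (∀ i, (rB i : L) = r i) ∧
      h.map (algebraMap k (integralClosure k[X] L)) - C ((algebraMap k[X] (integralClosure k[X] L) X) ^ e) * g.map (algebraMap k (integralClosure k[X] L)) = ∏ i, (X - C (rB i)) := by
  have h1 : ∀ i, IsIntegral k[X] (r i) := by
    intro i
    refine ⟨h.map C - C (X ^ e) * g.map C, ?_, ?_⟩
    · apply Monic.sub_of_left (hP.monic.map _)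
      calc degree (C (X ^ e) * g.map C : k[X][X]) ≤ degree (g.map C : k[X][X]) := by
              by_cases hX : (X ^ e : k[X]) = 0
              · simp [hX]
              · rw [degree_C_mul hX]
        _ ≤ degree g := degree_map_le
        _ < degree h := degree_lt_degree hP.deg
        _ = degree (h.map C : k[X][X]) := (degree_map_eq_of_injective C_injective _).symm
    · have := H.root i
      rw [eval₂_sub, eval₂_mul, eval₂_C, eval₂_map, eval₂_map]
      have h2 : (algebraMap k[X] L).comp C = algebraMap k L := by
        rw [IsScalarTower.algebraMap_eq k k[X] L]; rfl
      rw [h2, map_pow, ← aeval_def, ← aeval_def, this, sub_self]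
  refine ⟨fun i => ⟨r i, h1 i⟩, fun i => rfl, ?_⟩
  apply Polynomial.map_injective (algebraMap (integralClosure k[X] L) L) Subtype.val_injective
  rw [Polynomial.map_sub, Polynomial.map_mul, Polynomial.map_map, Polynomial.map_map, Polynomial.map_prod, map_C, ← IsScalarTower.algebraMap_eq]
  simp only [Polynomial.map_sub, map_X, map_C]
  rw [map_pow]
  exact H

theorem RootSys.red {rB : Fin n → integralClosure k[X] L} 
    (H : h.map (algebraMap k (integralClosure k[X] L)) - C ((algebraMap k[X] (integralClosure k[X] L) X) ^ e) * g.map (algebraMap k (integralClosure k[X] L)) = ∏ i, (X - C (rB i)))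
    (ρ : integralClosure k[X] L →ₐ[k] k) : 
    h - C ((ρ (algebraMap k[X] _ X)) ^ e) * g = ∏ i, (X - C (ρ (rB i))) := by
  have := congrArg (Polynomial.map (ρ : integralClosure k[X] L →+* k)) H
  rw [Polynomial.map_sub, Polynomial.map_mul, Polynomial.map_map, Polynomial.map_map, Polynomial.map_prod, map_C] at this
  have h2 : (ρ : integralClosure k[X] L →+* k).comp (algebraMap k (integralClosure k[X] L)) = RingHom.id k := by
    ext a; simp
  simpa [h2] using this

theorem zB_ne : (algebraMap k[X] (integralClosure k[X] L) X) ≠ 0 := by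
  have h1 : Function.Injective (algebraMap k[X] L) := by
    rw [IsScalarTower.algebraMap_eq k[X] (RatFunc k) L]
    exact (algebraMap (RatFunc k) L).injective.comp (IsFractionRing.injective k[X] (RatFunc k))
  intro h
  have := congrArg Subtype.val h
  change algebraMap k[X] L X = 0 at this
  rw [map_eq_zero_iff _ h1] at this
  exact X_ne_zero this

theorem RootSys.inj_of_ne {rB : Fin n → integralClosure k[X] L} (hP : Pack k h g e)
    (H : h.map (algebraMap k (integralClosure k[X] L)) - C ((algebraMap k[X] (integralClosure k[X] L) X) ^ e) * g.map (algebraMap k (integralClosure k[X] L)) = ∏ i, (X - C (rB i)))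
    (ρ : integralClosure k[X] L →ₐ[k] k) (hρ : ρ (algebraMap k[X] _ X) ≠ 0) : Function.Injective (fun i => ρ (rB i)) := by
  rw [← separable_prod_X_sub_C_iff, ← RootSys.red H ρ]
  exact hP.sep (pow_ne_zero _ hρ)

theorem RootSys.rootB {rB : Fin n → integralClosure k[X] L}
    (H : h.map (algebraMap k (integralClosure k[X] L)) - C ((algebraMap k[X] (integralClosure k[X] L) X) ^ e) * g.map (algebraMap k (integralClosure k[X] L)) = ∏ i, (X - C (rB i)))
    (i : Fin n) : aeval (rB i) h = (algebraMap k[X] (integralClosure k[X] L) X) ^ e * aeval (rB i) g := by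
  have := congrArg (eval (rB i)) H
  rw [eval_prod, Finset.prod_eq_zero (Finset.mem_univ i) (by simp)] at this
  simp only [eval_sub, eval_mul, eval_C, eval_map_algebraMap] at this
  exact sub_eq_zero.mp this

theorem RootSys.fix {rB : Fin n → integralClosure k[X] L} (hP : Pack k h g e)
    (H : h.map (algebraMap k (integralClosure k[X] L)) - C ((algebraMap k[X] (integralClosure k[X] L) X) ^ e) * g.map (algebraMap k (integralClosure k[X] L)) = ∏ i, (X - C (rB i)))
    (ρ : integralClosure k[X] L →ₐ[k] k) (hρ : ρ (algebraMap k[X] _ X) = 0) 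
    (s : integralClosure k[X] L →ₐ[k] integralClosure k[X] L) (hs : ∀ b, ρ (s b) = ρ b) {ζ : k} (hζ : ζ ^ e = 1)
    (hsz : s (algebraMap k[X] _ X) = algebraMap k _ ζ * algebraMap k[X] _ X) (i : Fin n) :
    s (rB i) = rB i ↔ ζ ^ (e / h.rootMultiplicity (ρ (rB i))) = 1 := by
  have h0 : h ≠ 0 := hP.monic.ne_zero
  have hroot := RootSys.rootB H i
  have ha : h.eval (ρ (rB i)) = 0 := by
    have := congrArg ρ hroot
    rw [map_mul, map_pow, hρ, zero_pow hP.e_ne, zero_mul, ← aeval_algHom_apply, coe_aeval_eq_eval] at this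
    exact this
  have hde := hP.dvd _ ha
  set m := h.rootMultiplicity (ρ (rB i)) with hmdef
  obtain ⟨q, hq⟩ := hde
  have hm0 : m ≠ 0 := fun h0 => hP.e_ne (by rw [hq, h0, zero_mul])
  have hq0 : q ≠ 0 := fun h0 => hP.e_ne (by rw [hq, h0, mul_zero])
  have hmk : (m : k) ≠ 0 := by
    intro h0; apply hP.e0; rw [hq]; push_cast; rw [h0, zero_mul]
  have hdiv : e / m = q := by rw [hq]; exact Nat.mul_div_cancel_left _ (Nat.pos_of_ne_zero hm0)
  rw [hdiv]
  obtain ⟨U, hU, hUn⟩ := Polynomial.exists_eq_pow_rootMultiplicity_mul_and_not_dvd h h0 (ρ (rB i))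
  have hUa : U.eval (ρ (rB i)) ≠ 0 := by rwa [dvd_iff_isRoot] at hUn
  rw [hq] at hroot hζ
  obtain ⟨w, hw⟩ := exists_w (k := k) (L := L) (B := integralClosure k[X] L) Subtype.val_injective (by
    intro m y b hm hy
    have hy1 : IsIntegral k[X] y := by
      apply IsIntegral.of_pow (Nat.pos_of_ne_zero hm)
      rw [hy]; exact b.2
    exact ⟨⟨y, hy1⟩, rfl⟩) hm0 hU zB_ne hroot
  exact twist_fix ρ s hs hmk hq0 hU hUa (hP.g_ne ha) zB_ne hρ rfl hroot hw hζ hsz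

theorem restr (σ : L →ₐ[k] L) (ζ : k) (hσ : σ (algebraMap k[X] L X) = algebraMap k L ζ * algebraMap k[X] L X) :
    ∃ s : integralClosure k[X] L →ₐ[k] integralClosure k[X] L, (∀ b, (s b : L) = σ b) ∧ s (algebraMap k[X] _ X) = algebraMap k _ ζ * algebraMap k[X] _ X := by
  have hint : ∀ b : integralClosure k[X] L, IsIntegral k[X] (σ b) := by
    intro b
    refine IsIntegral.map_of_comp_eq (compRingHom (C ζ * X)) (σ : L →+* L) ?_ b.2
    apply Polynomial.ringHom_ext
    · intro a
      have : algebraMap k[X] L (C a) = algebraMap k L a := by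
        rw [IsScalarTower.algebraMap_apply k k[X] L]; rfl
      simp [this]
    · have : algebraMap k[X] L (C ζ) = algebraMap k L ζ := by
        rw [IsScalarTower.algebraMap_apply k k[X] L]; rfl
      simp [this, hσ]
  let s : integralClosure k[X] L →ₐ[k] integralClosure k[X] L :=
    { toFun := fun b => ⟨σ b, hint b⟩
      map_one' := Subtype.ext (map_one σ)
      map_mul' := fun a b => Subtype.ext (map_mul σ _ _)
      map_zero' := Subtype.ext (map_zero σ)
      map_add' := fun a b => Subtype.ext (map_add σ _ _)
      commutes' := fun a => Subtype.ext (σ.commutes a) }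
  exact ⟨s, fun b => rfl, Subtype.ext hσ⟩

theorem exists_place (c : k) : ∃ ρ : integralClosure k[X] L →ₐ[k] k, ρ (algebraMap k[X] _ X) = c := by
  have hm : (Ideal.span {(X - C c : k[X])}).IsPrime := by
    rw [Ideal.span_singleton_prime (X_sub_C_ne_zero c)]
    exact prime_X_sub_C c
  have hinj : Function.Injective (algebraMap k[X] (integralClosure k[X] L)) := by
    have h1 : Function.Injective (algebraMap k[X] L) := by
      rw [IsScalarTower.algebraMap_eq k[X] (RatFunc k) L]
      exact (algebraMap (RatFunc k) L).injective.comp (IsFractionRing.injective k[X] (RatFunc k))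
    exact fun a b hab => h1 (congrArg Subtype.val hab)
  obtain ⟨Q, -, hQp, hQ⟩ := Ideal.exists_ideal_over_prime_of_isIntegral (S := integralClosure k[X] L) (Ideal.span {(X - C c : k[X])}) (⊥ : Ideal (integralClosure k[X] L)) (by
    intro x hx
    rw [Ideal.mem_comap, Ideal.mem_bot, map_eq_zero_iff _ hinj] at hx
    rw [hx]; exact Ideal.zero_mem _)
  obtain ⟨ρ, hρ⟩ := place_exists Q (by
    rw [hQ]; simp [Ideal.span_singleton_eq_bot, X_sub_C_ne_zero])
  refine ⟨ρ, ?_⟩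
  have : (X - C c : k[X]) ∈ Q.comap (algebraMap k[X] _) := by
    rw [hQ]; exact Ideal.mem_span_singleton_self _
  rw [Ideal.mem_comap, ← hρ, RingHom.mem_ker, map_sub, map_sub, sub_eq_zero] at this
  rw [this]
  have h4 := ρ.commutes c
  rwa [IsScalarTower.algebraMap_apply k k[X] (integralClosure k[X] L)] at h4

theorem RootSys.unram {r : Fin n → L} (hP : Pack k h g e) (H : RootSys h g e (algebraMap k[X] L X) r) 
    (hfix : ∀ σ : L ≃ₐ[RatFunc k] L, (∀ i, σ (r i) = r i) → σ = 1)
    (P : Ideal k[X]) (hPp : P.IsPrime) (hP0 : P ≠ ⊥)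
    (Q : Ideal (integralClosure k[X] L)) (hQ : Q.IsPrime) 
    (hQP : Q.comap (algebraMap (Polynomial k) (integralClosure (Polynomial k) L)) = P) :
    Ideal.ramificationIdx' P Q = 1 := by
  apply unram_of_inertia P hPp hP0 Q hQ hQP
  intro σ hσ
  apply hfix
  obtain ⟨rB, hrB, HB⟩ := H.integral hP
  obtain ⟨ρ, hρ⟩ := place_exists Q (by rw [hQP]; exact hP0)
  have hσk : ∀ q : k[X], σ (algebraMap k[X] L q) = algebraMap k[X] L q := by
    intro q
    rw [IsScalarTower.algebraMap_apply k[X] (RatFunc k) L, σ.commutes]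
  let σ' : L →ₐ[k] L := AlgHom.mk (σ : L →+* L) (fun a => by
      rw [IsScalarTower.algebraMap_apply k k[X] L]
      exact hσk _)
  obtain ⟨s, hs, hsz⟩ := restr σ' 1 (by rw [map_one, one_mul]; exact hσk X)
  have hsb : ∀ b, ρ (s b) = ρ b := by
    intro b
    have h1 : s b = σ • b := Subtype.ext (hs b)
    have h2 := hσ b
    rw [← hρ, RingHom.mem_ker, map_sub, sub_eq_zero] at h2
    rw [h1, h2]
  intro i
  have : s (rB i) = rB i := by
    by_cases hc : ρ (algebraMap k[X] _ X) = 0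
    · rw [RootSys.fix hP HB ρ hc s hsb (one_pow e) hsz]; simp
    · obtain ⟨π, hπ⟩ := H.perm (by
        have := RootSys.inj_of_ne hP HB ρ hc
        intro i j hij
        rw [← hrB, ← hrB] at hij
        exact this (congrArg ρ (Subtype.ext hij))) σ' (by rw [map_pow]; congr 1; exact hσk X) 
      have h1 : s (rB i) = rB (π i) := Subtype.ext (by rw [hs, hrB, hrB]; exact hπ i)
      have h2 := hsb (rB i)
      rw [h1] at h2
      have := RootSys.inj_of_ne hP HB ρ hc h2
      rw [h1, this]
  have h3 := congrArg Subtype.val this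
  rw [hs, hrB] at h3
  exact h3

theorem RootSys.twist {r : Fin n → L} (hP : Pack k h g e) (H : RootSys h g e (algebraMap k[X] L X) r) 
    {ζ : k} (hζ : ζ ^ e = 1) (σ₀ : L ≃ₐ[k] L) (hσ₀ : σ₀ (algebraMap k[X] L X) = algebraMap k L ζ * algebraMap k[X] L X) :
    ∃ (σ : L ≃ₐ[k] L) (a : Fin n → k), σ (algebraMap k[X] L X) = algebraMap k L ζ * algebraMap k[X] L X ∧
      h = ∏ i, (X - C (a i)) ∧ ∀ i j, (σ ^ j) (r i) = r i ↔ ζ ^ (j * (e / h.rootMultiplicity (a i))) = 1 := by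
  obtain ⟨rB, hrB, HB⟩ := H.integral hP
  obtain ⟨ρ, hρ⟩ := exists_place (k := k) (L := L) 0
  obtain ⟨s₀, hs₀, hsz₀⟩ := restr (σ₀ : L →ₐ[k] L) ζ hσ₀
  obtain ⟨η, hη⟩ := place_conj ρ (ρ.comp s₀) (by
    rw [AlgHom.comp_apply, hsz₀, map_mul, hρ, mul_zero])
  have hσk : ∀ q : k[X], η (algebraMap k[X] L q) = algebraMap k[X] L q := by
    intro q
    rw [IsScalarTower.algebraMap_apply k[X] (RatFunc k) L, η.commutes]
  let η' : L ≃ₐ[k] L := AlgEquiv.ofRingEquiv (f := (η : L ≃+* L)) (fun a => by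
      rw [IsScalarTower.algebraMap_apply k k[X] L]; exact hσk _)
  have hηη : ∀ y, η' y = η y := fun y => rfl
  set σ : L ≃ₐ[k] L := σ₀ * η' with hσdef
  have hσz : σ (algebraMap k[X] L X) = algebraMap k L ζ * algebraMap k[X] L X := by
    rw [hσdef, AlgEquiv.mul_apply, hηη, hσk, hσ₀]
  have hσj : ∀ j, (σ ^ j) (algebraMap k[X] L X) = algebraMap k L (ζ ^ j) * algebraMap k[X] L X := by
    intro j
    induction j with
    | zero => simp
    | succ j ih => 
      rw [pow_succ, AlgEquiv.mul_apply, hσz, map_mul, ih, AlgEquiv.commutes, pow_succ, map_mul]; ring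
  obtain ⟨s, hs, hsz⟩ := restr (σ : L →ₐ[k] L) ζ hσz
  have hsb : ∀ b, ρ (s b) = ρ b := by
    intro b
    rw [← hη b, AlgHom.comp_apply]
    congr 1
    apply Subtype.ext
    rw [hs, hs₀]
    rfl
  refine ⟨σ, fun i => ρ (rB i), hσz, ?_, ?_⟩
  · have := RootSys.red HB ρ
    rw [hρ, zero_pow hP.e_ne, C_0, zero_mul, sub_zero] at this
    exact this
  · intro i j
    have hsj : ∀ b, ((s ^ j) b : L) = (σ ^ j) b := by
      clear_value σ
      induction j with
      | zero => intro b; rfl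
      | succ j ih => 
        intro b
        rw [pow_succ, pow_succ, AlgEquiv.mul_apply, AlgHom.mul_apply, ih, hs]; rfl
    have hsbj : ∀ b, ρ ((s ^ j) b) = ρ b := by
      clear hsj
      induction j with
      | zero => intro b; rfl
      | succ j ih => 
        intro b
        rw [pow_succ, AlgHom.mul_apply, ih, hsb]
    have := RootSys.fix hP HB ρ hρ (s ^ j) hsbj (ζ := ζ ^ j) (by rw [← pow_mul, mul_comm, pow_mul, hζ, one_pow]) (by
      apply Subtype.ext
      rw [hsj]
      exact hσj j) i
    rw [← pow_mul] at this
    rw [← this, ← Subtype.coe_inj, hsj, hrB]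

theorem RootSys.sign {r : Fin n → L} (hP : Pack k h g e) (H : RootSys h g e (algebraMap k[X] L X) r) (hr : Function.Injective r)
    (σ₀ : L ≃ₐ[k] L) (hσ₀ : σ₀ (algebraMap k[X] L X) = - algebraMap k[X] L X) 
    (σ : L ≃ₐ[RatFunc k] L) (π : Equiv.Perm (Fin n)) (hπ : ∀ i, σ (r i) = r (π i)) : Equiv.Perm.sign π = 1 := by
  obtain ⟨rB, hrB, HB⟩ := H.integral hP
  have h2k := hP.two_ne
  have h2L : (2 : L) ≠ 0 := by
    have := (_root_.map_ne_zero (algebraMap k L)).mpr h2k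
    rwa [map_ofNat] at this
  set z := algebraMap k[X] L X with hz
  have hdet : ∀ (τ : L →+* L) (π : Equiv.Perm (Fin n)), (∀ i, τ (r i) = r (π i)) →
      τ (Matrix.vandermonde r).det = (Equiv.Perm.sign π : ℤ) * (Matrix.vandermonde r).det := by
    intro τ π hπ
    rw [← Matrix.det_permute, RingHom.map_det]
    congr 1
    ext i j
    simp [Matrix.vandermonde_apply, hπ]
  set δ := (Matrix.vandermonde r).det with hδ
  have hδ0 : δ ≠ 0 := Matrix.det_vandermonde_ne_zero_iff.mpr hr
  have hsq : ∀ (τ : L →+* L) (π : Equiv.Perm (Fin n)), (∀ i, τ (r i) = r (π i)) → τ (δ ^ 2) = δ ^ 2 := by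
    intro τ π hπ
    rw [map_pow, hdet τ π hπ, mul_pow]
    rcases Int.units_eq_one_or (Equiv.Perm.sign π) with h | h <;> simp [h]
  set δB := (Matrix.vandermonde rB).det with hδB
  have hδBδ : (δB : L) = δ := by
    have h1 : (δB : L) = (algebraMap (integralClosure k[X] L) L) δB := rfl
    rw [h1, hδB, RingHom.map_det, hδ]
    congr 1
    ext i j
    simp only [RingHom.mapMatrix_apply, Matrix.map_apply, Matrix.vandermonde_apply, map_pow]
    rw [← hrB]; rfl
  have hinv := instInv (k := k) (L := L)
  have hσk : ∀ (η : L ≃ₐ[RatFunc k] L) (q : k[X]), η (algebraMap k[X] L q) = algebraMap k[X] L q := by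
    intro η q
    rw [IsScalarTower.algebraMap_apply k[X] (RatFunc k) L, η.commutes]
  obtain ⟨d, hd⟩ := hinv.isInvariant (δB ^ 2) (by
    intro η
    apply Subtype.ext
    let η' : L →ₐ[k] L := AlgHom.mk (η : L →+* L) (fun a => by
      rw [IsScalarTower.algebraMap_apply k k[X] L]
      exact hσk η _)
    obtain ⟨π, hπ⟩ := H.perm hr η' (by rw [map_pow]; congr 1; exact hσk η X)
    have := hsq (η' : L →+* L) π hπ
    rw [← hδBδ] at this
    exact this)
  have hdL : algebraMap k[X] L d = δ ^ 2 := by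
    rw [← hδBδ]; exact congrArg Subtype.val hd
  have hd0 : d ≠ 0 := by
    rintro rfl
    rw [map_zero] at hdL
    exact pow_ne_zero 2 hδ0 hdL.symm
  have hroot : ∀ c, d.eval c = 0 → c = 0 := by
    intro c hc
    by_contra hc0
    obtain ⟨ρ, hρ⟩ := exists_place (k := k) (L := L) c
    have hinj := RootSys.inj_of_ne hP HB ρ (by rw [hρ]; exact hc0)
    have h1 := Matrix.det_vandermonde_ne_zero_iff.mpr hinj
    apply h1
    have h2 : ρ δB = (Matrix.vandermonde fun i => ρ (rB i)).det := by
      rw [hδB, AlgHom.map_det]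
      congr 1
      ext i j
      simp [Matrix.vandermonde_apply]
    rw [← h2]
    have h3 : ρ (algebraMap k[X] _ d) = d.eval c := by
      have : ∀ q : k[X], ρ (algebraMap k[X] _ q) = q.eval c := by
        intro q
        have : (ρ : integralClosure k[X] L →+* k).comp (algebraMap k[X] _) = evalRingHom c := by
          apply Polynomial.ringHom_ext
          · intro a
            have := ρ.commutes a
            simp_all [IsScalarTower.algebraMap_apply k k[X] (integralClosure k[X] L)]
          · simpa using hρ
        exact congrArg (fun f => f q) this
      exact this d
    rw [hd, hc, map_pow] at h3
    exact pow_eq_zero_iff (two_ne_zero) |>.mp h3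
  -- d = C * X ^ M
  obtain ⟨U, hU, hUn⟩ := Polynomial.exists_eq_pow_rootMultiplicity_mul_and_not_dvd d hd0 0
  set M := d.rootMultiplicity 0
  rw [dvd_iff_isRoot] at hUn
  have hUdeg : U.degree = 0 := by
    by_contra hdeg
    obtain ⟨c, hc⟩ := IsAlgClosed.exists_root U hdeg
    have : c = 0 := hroot c (by rw [hU, eval_mul, hc.eq_zero, mul_zero])
    exact hUn (this ▸ hc)
  rw [eq_C_of_degree_eq_zero hUdeg] at hU
  set u := U.coeff 0
  have hu : u ≠ 0 := by
    intro h0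
    rw [h0, C_0, mul_zero] at hU; exact hd0 hU
  have hδz : δ ^ 2 = z ^ M * algebraMap k L u := by
    rw [← hdL, hU, map_mul, map_pow, C_0, sub_zero]
    rw [IsScalarTower.algebraMap_apply k k[X] L]; rfl
  have hz0 : z ≠ 0 := by
    intro h0
    have : (algebraMap k[X] (integralClosure k[X] L) X) = 0 := Subtype.ext h0
    exact zB_ne this
  have huL : algebraMap k L u ≠ 0 := (_root_.map_ne_zero _).mpr hu
  have hMeven : Even M := by
    obtain ⟨π, hπ⟩ := H.perm hr (σ₀ : L →ₐ[k] L) (by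
      rw [map_pow]
      change (σ₀ z) ^ e = z ^ e
      rw [hσ₀, hP.even.neg_pow])
    have h1 := hsq (σ₀ : L →+* L) π hπ
    rw [hδz] at h1
    change σ₀ _ = _ at h1
    rw [map_mul, map_pow, hσ₀, AlgEquiv.commutes] at h1
    have h3 := mul_right_cancel₀ huL h1
    by_contra hodd
    rw [Nat.not_even_iff_odd] at hodd
    rw [hodd.neg_pow] at h3
    have h4 : (2 : L) * z ^ M = 0 := by linear_combination - h3
    rcases mul_eq_zero.mp h4 with h | h
    · exact h2L h
    · exact pow_ne_zero _ hz0 h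
  obtain ⟨N, hN⟩ := hMeven
  obtain ⟨v, hv⟩ := IsAlgClosed.exists_pow_nat_eq u (n := 2) (by norm_num)
  have h5 : δ ^ 2 = (z ^ N * algebraMap k L v) ^ 2 := by
    rw [hδz, hN, ← hv, map_pow]; ring
  have hfixk : ∀ a, σ (algebraMap k L a) = algebraMap k L a := by
    intro a
    rw [IsScalarTower.algebraMap_apply k k[X] L]; exact hσk σ _
  have h6 : σ δ = δ := by
    rcases sq_eq_sq_iff_eq_or_eq_neg.mp h5 with h | h <;>
      simp only [h, map_neg, map_mul, map_pow, hz, hσk, hfixk]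
  have h7 := hdet (σ : L →+* L) π hπ
  change σ δ = _ at h7
  rw [h6] at h7
  rcases Int.units_eq_one_or (Equiv.Perm.sign π) with h | h
  · exact h
  · exfalso
    rw [h] at h7
    have h8 : 2 * δ = 0 := by push_cast at h7; linear_combination h7
    rcases mul_eq_zero.mp h8 with h | h
    · exact h2L h
    · exact hδ0 h
end

open Polynomial
set_option linter.unusedSectionVars false

theorem three_comm {n : ℕ} {c : Equiv.Perm (Fin n)} (hc : c.IsThreeCycle) : ∃ g : Equiv.Perm (Fin n), g * c * g⁻¹ * c⁻¹ = c := by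
  have h1 : IsConj c c⁻¹ := by
    rw [Equiv.Perm.isConj_iff_cycleType_eq, Equiv.Perm.cycleType_inv]
  obtain ⟨g, hg⟩ := isConj_iff.mp h1
  refine ⟨g, ?_⟩
  rw [hg]
  have h3 : c ^ 3 = 1 := by rw [← hc.orderOf]; exact pow_orderOf_eq_one c
  have : c⁻¹ * c⁻¹ = c ^ 3 * (c⁻¹ * c⁻¹) := by rw [h3, one_mul]
  rw [this]; group

theorem exists_zeta {k L : Type} [Field k] [IsAlgClosed k] [Field L] [Algebra k L] {e : ℕ} (he : (e : k) ≠ 0)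
    {y : L} (hy : y ^ e = 1) : ∃ ζ : k, algebraMap k L ζ = y := by
  have he0 : e ≠ 0 := by rintro rfl; simp at he
  have hint : IsIntegral k y := ⟨X ^ e - 1, monic_X_pow_sub_C (1 : k) he0, by simp [hy]⟩
  have hdeg := IsAlgClosed.degree_eq_one_of_irreducible k (minpoly.irreducible hint)
  exact minpoly.mem_range_of_degree_eq_one k y hdeg

section
variable {k : Type} [Field k] [IsAlgClosed k] {L : Type} [Field L] [Algebra k L] [Algebra k[X] L] [Algebra (RatFunc k) L] [IsScalarTower k k[X] L] [IsScalarTower k[X] (RatFunc k) L] [FiniteDimensional (RatFunc k) L] [IsGalois (RatFunc k) L]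
variable {h g : k[X]} {e n : ℕ} 

theorem galois_iso {r : Fin n → L} (hP : Pack k h g e) (H : RootSys h g e (algebraMap k[X] L X) r) (hr : Function.Injective r)
    (hfix : ∀ σ : L ≃ₐ[RatFunc k] L, (∀ i, σ (r i) = r i) → σ = 1)
    (htw : ∃ σ₀ : L ≃ₐ[k] L, σ₀ (algebraMap k[X] L X) = - algebraMap k[X] L X)
    (hfull : ∀ π : Equiv.Perm (Fin n), ∃ σ : L ≃ₐ[k] L, σ (algebraMap k[X] L X ^ e) = algebraMap k[X] L X ^ e ∧ ∀ i, σ (r i) = r (π i)) :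
    Nonempty ((L ≃ₐ[RatFunc k] L) ≃* alternatingGroup (Fin n)) := by
  have hσk : ∀ (η : L ≃ₐ[RatFunc k] L) (q : k[X]), η (algebraMap k[X] L q) = algebraMap k[X] L q := by
    intro η q
    rw [IsScalarTower.algebraMap_apply k[X] (RatFunc k) L, η.commutes]
  have hperm : ∀ η : L ≃ₐ[RatFunc k] L, ∃ π : Equiv.Perm (Fin n), ∀ i, η (r i) = r (π i) := by
    intro η
    let η' : L →ₐ[k] L := AlgHom.mk (η : L →+* L) (fun a => by
      rw [IsScalarTower.algebraMap_apply k k[X] L]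
      exact hσk η _)
    exact H.perm hr η' (by rw [map_pow]; congr 1; exact hσk η X)
  choose f hf using hperm
  let ψ : (L ≃ₐ[RatFunc k] L) →* Equiv.Perm (Fin n) := MonoidHom.mk' f (by
    intro a b
    ext i : 1
    apply hr
    rw [← hf, Equiv.Perm.mul_apply, AlgEquiv.mul_apply, hf, hf])
  have hψ : ∀ σ i, σ (r i) = r (ψ σ i) := hf
  have hinj : Function.Injective ψ := by
    rw [injective_iff_map_eq_one]
    intro σ hσ
    apply hfix
    intro i
    rw [hψ, hσ]; rfl
  have hrange : ψ.range = alternatingGroup (Fin n) := by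
    apply le_antisymm
    · rintro _ ⟨σ, rfl⟩
      obtain ⟨σ₀, hσ₀⟩ := htw
      rw [Equiv.Perm.mem_alternatingGroup]
      exact H.sign hP hr σ₀ hσ₀ σ _ (hψ σ)
    · rw [← Equiv.Perm.closure_three_cycles_eq_alternating, Subgroup.closure_le]
      intro c hc
      obtain ⟨g', hg⟩ := three_comm hc
      rw [← hg]
      obtain ⟨σ, hσ, hσr⟩ := hfull g'
      obtain ⟨τ, hτ, hτr⟩ := hfull c
      set z := algebraMap k[X] L X with hz
      have hz0 : z ≠ 0 := by
        intro h0
        have : (algebraMap k[X] (integralClosure k[X] L) X) = 0 := Subtype.ext h0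
        exact zB_ne this
      have hzeta : ∀ σ : L ≃ₐ[k] L, σ (z ^ e) = z ^ e → ∃ ζ : k, σ z = algebraMap k L ζ * z := by
        intro σ hσ
        obtain ⟨ζ, hζ⟩ := exists_zeta (k := k) (y := σ z / z) hP.e0 (by
          rw [div_pow, ← map_pow, hσ, div_self (pow_ne_zero _ hz0)])
        exact ⟨ζ, by rw [hζ, div_mul_cancel₀ _ hz0]⟩
      obtain ⟨ζ₁, h1⟩ := hzeta σ hσ
      obtain ⟨ζ₂, h2⟩ := hzeta τ hτ
      have hcz : (σ * τ * σ⁻¹ * τ⁻¹) z = z := by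
        have : (σ * τ) z = (τ * σ) z := by
          simp only [AlgEquiv.mul_apply, h1, h2, map_mul, AlgEquiv.commutes]; ring
        have h3 : σ * τ * σ⁻¹ * τ⁻¹ = (σ * τ) * (τ * σ)⁻¹ := by group
        have h4 : (τ * σ)⁻¹ ((τ * σ) z) = z := by
          rw [← AlgEquiv.mul_apply, inv_mul_cancel, AlgEquiv.one_apply]
        have h5 : (τ * σ)⁻¹ ((σ * τ) z) = z := by rw [this, h4]
        rw [h3]
        have h6 : (τ * σ)⁻¹ z = (σ * τ)⁻¹ z := by
          apply (τ * σ).injective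
          apply (τ * σ)⁻¹.injective
          have e1 : ((τ * σ)⁻¹) z = algebraMap k L (ζ₁ * ζ₂)⁻¹ * z := by
            apply (τ * σ).injective
            rw [← AlgEquiv.mul_apply, mul_inv_cancel, AlgEquiv.one_apply, map_mul, AlgEquiv.commutes]
            simp only [AlgEquiv.mul_apply, h1, h2, map_mul, AlgEquiv.commutes]
            have z1 : ζ₁ ≠ 0 := by
              rintro rfl; rw [map_zero, zero_mul] at h1
              exact hz0 ((map_eq_zero_iff σ σ.injective).mp h1)
            have z2 : ζ₂ ≠ 0 := by
              rintro rfl; rw [map_zero, zero_mul] at h2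
              exact hz0 ((map_eq_zero_iff τ τ.injective).mp h2)
            have : algebraMap k L (ζ₁ * ζ₂)⁻¹ * (algebraMap k L ζ₁ * algebraMap k L ζ₂) = 1 := by
              rw [← map_mul, ← map_mul, inv_mul_cancel₀ (mul_ne_zero z1 z2), map_one]
            linear_combination (-z) * this
          have e2 : ((σ * τ)⁻¹) z = algebraMap k L (ζ₁ * ζ₂)⁻¹ * z := by
            apply (σ * τ).injective
            rw [← AlgEquiv.mul_apply, mul_inv_cancel, AlgEquiv.one_apply, map_mul, AlgEquiv.commutes]
            simp only [AlgEquiv.mul_apply, h1, h2, map_mul, AlgEquiv.commutes]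
            have z1 : ζ₁ ≠ 0 := by
              rintro rfl; rw [map_zero, zero_mul] at h1
              exact hz0 ((map_eq_zero_iff σ σ.injective).mp h1)
            have z2 : ζ₂ ≠ 0 := by
              rintro rfl; rw [map_zero, zero_mul] at h2
              exact hz0 ((map_eq_zero_iff τ τ.injective).mp h2)
            have : algebraMap k L (ζ₁ * ζ₂)⁻¹ * (algebraMap k L ζ₁ * algebraMap k L ζ₂) = 1 := by
              rw [← map_mul, ← map_mul, inv_mul_cancel₀ (mul_ne_zero z1 z2), map_one]
            linear_combination (-z) * this
          rw [e1, e2]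
        rw [AlgEquiv.mul_apply, h6, ← AlgEquiv.mul_apply, mul_inv_cancel, AlgEquiv.one_apply]
      have hcr : ∀ i, (σ * τ * σ⁻¹ * τ⁻¹) (r i) = r ((g' * c * g'⁻¹ * c⁻¹) i) := by
        have hinv : ∀ (σ : L ≃ₐ[k] L) (π : Equiv.Perm (Fin n)), (∀ i, σ (r i) = r (π i)) → ∀ i, σ⁻¹ (r i) = r (π⁻¹ i) := by
          intro σ π h i
          apply σ.injective
          rw [← AlgEquiv.mul_apply, mul_inv_cancel, h]; simp
        intro i
        simp only [AlgEquiv.mul_apply, Equiv.Perm.mul_apply, hinv σ _ hσr, hinv τ _ hτr, hσr, hτr]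
      set κ := σ * τ * σ⁻¹ * τ⁻¹
      have hκ : ∀ q : k[X], κ (algebraMap k[X] L q) = algebraMap k[X] L q := by
        intro q
        have : (κ : L →+* L).comp (algebraMap k[X] L) = algebraMap k[X] L := by
          apply Polynomial.ringHom_ext
          · intro a
            have : algebraMap k[X] L (C a) = algebraMap k L a := by
              rw [IsScalarTower.algebraMap_apply k k[X] L]; rfl
            rw [RingHom.comp_apply, this]
            exact κ.commutes a
          · exact hcz
        exact congrArg (fun f => f q) this
      refine ⟨AlgEquiv.ofRingEquiv (f := (κ : L ≃+* L)) ?_, ?_⟩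
      · intro q
        induction q using RatFunc.induction_on with
        | f a b hb => 
          rw [map_div₀, map_div₀, ← IsScalarTower.algebraMap_apply, ← IsScalarTower.algebraMap_apply]
          change κ _ / κ _ = _
          rw [hκ, hκ]
      · ext i : 1
        apply hr
        rw [← hψ, ← hcr]
        rfl
  exact ⟨(MonoidHom.ofInjective hinj).trans (MulEquiv.subgroupCongr hrange)⟩
end

open Polynomial
set_option linter.unusedSectionVars false

def permGrp (k : Type) {L : Type} [Field k] [Field L] [Algebra k L] (x : L) {n : ℕ} (r : Fin n → L) : Subgroup (Equiv.Perm (Fin n)) where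
  carrier := {π | ∃ σ : L ≃ₐ[k] L, σ x = x ∧ ∀ i, σ (r i) = r (π i)}
  one_mem' := ⟨1, rfl, fun i => rfl⟩
  mul_mem' := by
    rintro a b ⟨σ, hσ, h1⟩ ⟨τ, hτ, h2⟩
    refine ⟨σ * τ, by rw [AlgEquiv.mul_apply, hτ, hσ], fun i => by rw [AlgEquiv.mul_apply, h2, h1]; rfl⟩
  inv_mem' := by
    rintro a ⟨σ, hσ, h1⟩
    refine ⟨σ⁻¹, ?_, fun i => ?_⟩
    · apply σ.injective
      rw [← AlgEquiv.mul_apply, mul_inv_cancel, hσ]; simp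
    · apply σ.injective
      rw [← AlgEquiv.mul_apply, mul_inv_cancel, h1]; simp

theorem count_mult {k : Type} [Field k] {h : k[X]} {n : ℕ} {a : Fin n → k} [DecidableEq k] (hh : h = ∏ i, (X - C (a i))) (b : k) :
    (Finset.univ.filter fun i => a i = b).card = h.rootMultiplicity b := by
  have : h.roots = Finset.univ.val.map a := by
    rw [hh, ← roots_multiset_prod_X_sub_C (Finset.univ.val.map a), Multiset.map_map]; rfl
  rw [← count_roots, this, Multiset.count_map, Finset.card_def, Finset.filter_val]
  simp [eq_comm]

theorem four_odd : ∀ s : Equiv.Perm (Fin 4), (∀ i, s i ≠ i) → (∀ i, s (s i) ≠ i) → Equiv.Perm.sign s = -1 := by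
  decide

theorem prim_four (G : Subgroup (Equiv.Perm (Fin 4))) (hG : MulAction.IsPreprimitive G (Fin 4))
    (s : Equiv.Perm (Fin 4)) (hs : s ∈ G) (h1 : ∀ i, s i ≠ i) (h2 : ∀ i, s (s i) ≠ i) : G = ⊤ := by
  have hsign := four_odd s h1 h2
  have hcoat := MulAction.IsPreprimitive.isCoatom_stabilizer_of_isPreprimitive (G := G) (X := Fin 4) 0
  have hcard : Nat.card G ∣ 24 := by
    have := Subgroup.card_subgroup_dvd_card G
    rwa [Nat.card_perm, Nat.card_fin] at this
  have htr : MulAction.IsPretransitive G (Fin 4) := inferInstance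
  have hidx : (MulAction.stabilizer G (0 : Fin 4)).index = 4 := by
    rw [MulAction.index_stabilizer_of_transitive, Nat.card_fin]
  have h4 : 4 ∣ Nat.card G := by
    have := Subgroup.index_dvd_card (MulAction.stabilizer G (0 : Fin 4))
    rwa [hidx] at this
  have h3 : 3 ∣ Nat.card G := by
    by_contra h3
    have hpow : ∃ j, Nat.card G = 2 ^ j := by
      have h8 : Nat.card G ∣ 2 ^ 3 := by
        have hc : Nat.Coprime (Nat.card G) 3 := ((Nat.Prime.coprime_iff_not_dvd Nat.prime_three).mpr h3).symm
        exact hc.dvd_of_dvd_mul_right (by norm_num; exact hcard)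
      obtain ⟨j, -, hj⟩ := (Nat.dvd_prime_pow Nat.prime_two).mp h8
      exact ⟨j, hj⟩
    obtain ⟨j, hj⟩ := hpow
    have : Fact (Nat.Prime 2) := ⟨Nat.prime_two⟩
    have hpg : IsPGroup 2 G := IsPGroup.of_card hj
    have hnil : Group.IsNilpotent G := hpg.isNilpotent
    have hnorm : (MulAction.stabilizer G (0 : Fin 4)).Normal :=
      Subgroup.NormalizerCondition.normal_of_coatom _ Group.normalizerCondition_of_isNilpotent hcoat
    have hle : ∀ t : G, t ∈ MulAction.stabilizer G (0 : Fin 4) → t = 1 := by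
      intro t ht
      apply Subtype.ext
      ext i : 1
      obtain ⟨u, hu⟩ := MulAction.exists_smul_eq G (0 : Fin 4) i
      have := hnorm.conj_mem t ht u⁻¹
      rw [MulAction.mem_stabilizer_iff, inv_inv, mul_smul, mul_smul, inv_smul_eq_iff, hu] at this
      exact this
    have hbot : MulAction.stabilizer G (0 : Fin 4) = ⊥ := by
      rw [eq_bot_iff]; intro t ht; rw [hle t ht]; exact Subgroup.mem_bot.mpr rfl
    rw [hbot] at hcoat hidx
    rw [Subgroup.index_bot] at hidx
    let s' : G := ⟨s, hs⟩
    have hs2 : s' ^ 2 ≠ 1 := by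
      intro h
      apply h2 0
      have := congrArg (fun t : G => (t : Equiv.Perm (Fin 4)) 0) h
      simpa [pow_two] using this
    have := hcoat.2 (Subgroup.zpowers (s' ^ 2)) (by
      rw [bot_lt_iff_ne_bot, Ne, Subgroup.zpowers_eq_bot]; exact hs2)
    have h5 : s' ∈ Subgroup.zpowers (s' ^ 2) := by rw [this]; trivial
    have h6 : (s' ^ 2) ^ 2 = 1 := by
      rw [← pow_mul]; have := pow_card_eq_one' (x := s'); rwa [hidx] at this
    obtain ⟨j, hj⟩ := Subgroup.mem_zpowers_iff.mp h5
    have : s' ^ 2 = 1 := by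
      calc s' ^ 2 = ((s' ^ 2) ^ j) ^ 2 := by rw [hj]
        _ = ((s' ^ 2) ^ 2) ^ j := by rw [← zpow_natCast ((s' ^ 2) ^ j), ← zpow_natCast (s' ^ 2) 2, ← zpow_mul, ← zpow_mul, mul_comm]
        _ = 1 := by rw [h6, one_zpow]
    exact hs2 this
  have h12 : 12 ∣ Nat.card G := by
    have := Nat.Coprime.mul_dvd_of_dvd_of_dvd (by norm_num : Nat.Coprime 3 4) h3 h4
    exact this
  have hidx2 : G.index ≤ 2 := by
    have := Subgroup.card_mul_index G
    rw [Nat.card_perm, Nat.card_fin] at this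
    have h24 : Nat.factorial 4 = 24 := rfl
    rw [h24] at this
    obtain ⟨c, hc⟩ := h12
    rw [hc] at this
    have hc0 : c ≠ 0 := by rintro rfl; simp at this
    have : 1 ≤ c := Nat.one_le_iff_ne_zero.mpr hc0
    nlinarith
  have hA := Equiv.Perm.alternatingGroup_le_of_index_le_two hidx2
  rw [eq_top_iff]
  intro t _
  rcases Int.units_eq_one_or (Equiv.Perm.sign t) with h | h
  · exact hA (Equiv.Perm.mem_alternatingGroup.mpr h)
  · have : t * s ∈ G := hA (Equiv.Perm.mem_alternatingGroup.mpr (by rw [map_mul, h, hsign]; rfl))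
    exact (Subgroup.mul_mem_cancel_right G hs).mp this

/-- condition on zero multiplicities -/
def GrpCond {k : Type} [Field k] (h : k[X]) (e n : ℕ) : Prop :=
  (∃ q, e = 2 * q ∧ Odd q ∧ ∃ a₀, h.rootMultiplicity a₀ = 2 ∧ ∀ a, a ≠ a₀ → h.eval a = 0 → Odd (h.rootMultiplicity a)) ∨
  (n = 4 ∧ e = 4 ∧ h = X ^ 4)

section
variable {k : Type} [Field k] [IsAlgClosed k] {L : Type} [Field L] [Algebra k L] [Algebra k[X] L] [Algebra (RatFunc k) L] [IsScalarTower k k[X] L] [IsScalarTower k[X] (RatFunc k) L] [FiniteDimensional (RatFunc k) L] [IsGalois (RatFunc k) L]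
variable {h g : k[X]} {e n : ℕ} 

theorem perm_top {r : Fin n → L} (hP : Pack k h g e) (H : RootSys h g e (algebraMap k[X] L X) r) (hr : Function.Injective r)
    (htw : ∀ ζ : k, ζ ^ e = 1 → ∃ σ₀ : L ≃ₐ[k] L, σ₀ (algebraMap k[X] L X) = algebraMap k L ζ * algebraMap k[X] L X)
    (hg : GrpCond h e n) (hprim : MulAction.IsPreprimitive (permGrp k (algebraMap k[X] L X ^ e) r) (Fin n)) :
    permGrp k (algebraMap k[X] L X ^ e) r = ⊤ := by
  classical
  have key : ∀ ζ : k, ζ ^ e = 1 → ∃ (π : Equiv.Perm (Fin n)) (a : Fin n → k), π ∈ permGrp k (algebraMap k[X] L X ^ e) r ∧ 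
      h = ∏ i, (X - C (a i)) ∧ ∀ i j, (π ^ j) i = i ↔ ζ ^ (j * (e / h.rootMultiplicity (a i))) = 1 := by
    intro ζ hζ
    obtain ⟨σ₀, hσ₀⟩ := htw ζ hζ
    obtain ⟨σ, a, hσ, ha, hj⟩ := H.twist hP hζ σ₀ hσ₀
    have hσe : σ (algebraMap k[X] L X ^ e) = algebraMap k[X] L X ^ e := by
      rw [map_pow, hσ, mul_pow, ← map_pow, hζ, map_one, one_mul]
    obtain ⟨π, hπ⟩ := H.perm hr (σ : L →ₐ[k] L) hσe
    refine ⟨π, a, ⟨σ, hσe, hπ⟩, ha, fun i j => ?_⟩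
    rw [← hj]
    have : ∀ j i, (σ ^ j) (r i) = r ((π ^ j) i) := by
      intro j
      induction j with
      | zero => intro i; rfl
      | succ j ih => 
        intro i
        rw [pow_succ, pow_succ, AlgEquiv.mul_apply, Equiv.Perm.mul_apply, ← ih]
        congr 1
        exact hπ i
    rw [this]
    exact hr.eq_iff.symm
  rcases hg with ⟨q, he, hq, a₀, ha₀, hodd⟩ | ⟨rfl, rfl, rfl⟩
  · obtain ⟨π, a, hπ, ha, hj⟩ := key (-1) (by rw [hP.even.neg_one_pow])
    refine Equiv.Perm.subgroup_eq_top_of_isPreprimitive_of_isSwap_mem hprim π ?_ hπ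
    rw [← Equiv.Perm.card_support_eq_two, ← ha₀, ← count_mult ha a₀]
    congr 1
    ext i
    rw [Equiv.Perm.mem_support, Finset.mem_filter]
    simp only [Finset.mem_univ, true_and]
    have h1 := hj i 1
    rw [pow_one, one_mul] at h1
    rw [Ne, h1]
    have hnn : (-1 : k) ≠ 1 := by
      intro h; apply hP.two_ne; linear_combination -h
    constructor
    · intro h2
      by_contra h3
      apply h2
      have hroot : h.eval (a i) = 0 := by
        rw [ha, eval_prod]; exact Finset.prod_eq_zero (Finset.mem_univ i) (by simp)
      have h4 := hodd _ h3 hroot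
      have h5 := hP.dvd _ hroot
      apply Even.neg_one_pow
      obtain ⟨t, ht⟩ := h5
      have hpos : 0 < h.rootMultiplicity (a i) := h4.pos
      rw [ht, Nat.mul_div_cancel_left _ hpos]
      have h6 : Even (h.rootMultiplicity (a i) * t) := by rw [← ht, he]; exact even_two_mul q
      rcases Nat.even_mul.mp h6 with h7 | h7
      · exact absurd h7 (Nat.not_even_iff_odd.mpr h4)
      · exact h7
    · intro h2
      rw [h2, ha₀, he, Nat.mul_div_cancel_left _ (by norm_num : 0 < 2), hq.neg_one_pow]
      exact hnn
  · have h4k : ((4 : ℕ) : k) ≠ 0 := hP.e0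
    obtain ⟨ζ, hζ⟩ := IsAlgClosed.exists_pow_nat_eq (-1 : k) (n := 2) (by norm_num)
    have hnn : (-1 : k) ≠ 1 := by
      intro h; apply hP.two_ne; linear_combination -h
    obtain ⟨π, a, hπ, ha, hj⟩ := key ζ (by rw [show 4 = 2 * 2 from rfl, pow_mul, hζ]; norm_num)
    have hmult : ∀ i, (X ^ 4 : k[X]).rootMultiplicity (a i) = 4 := by
      intro i
      have hroot : (X ^ 4 : k[X]).eval (a i) = 0 := by
        rw [ha, eval_prod]; exact Finset.prod_eq_zero (Finset.mem_univ i) (by simp)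
      have : a i = 0 := by simpa using hroot
      rw [this]
      have := rootMultiplicity_X_sub_C_pow (0 : k) 4
      simpa using this
    refine prim_four _ hprim π hπ ?_ ?_
    · intro i hi
      have h1 := (hj i 1).mp (by rw [pow_one]; exact hi)
      rw [hmult] at h1
      norm_num at h1
      rw [h1] at hζ
      apply hnn; rw [← hζ]; norm_num
    · intro i hi
      have h1 := (hj i 2).mp (by rw [pow_two]; exact hi)
      rw [hmult] at h1
      norm_num at h1
      rcases h1 with h1 | h1 <;> · rw [h1] at hζ; apply hnn; rw [← hζ]; norm_num
end

theorem finish {k : Type} [Field k] [IsAlgClosed k] {h g : k[X]} {e n : ℕ} (hP : Pack k h g e) (hg : GrpCond h e n)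
    (L : Type) [Field L] [Algebra k L] (z : L) (hz : Transcendental k z) (r : Fin n → L) (hr : Function.Injective r)
    (H : RootSys h g e z r) (hgen : IntermediateField.adjoin k (insert z (Set.range r)) = ⊤)
    (htw : ∀ ζ : k, ζ ^ e = 1 → ∃ σ₀ : L ≃ₐ[k] L, σ₀ z = algebraMap k L ζ * z)
    (hprim : MulAction.IsPreprimitive (permGrp k (z ^ e) r) (Fin n)) :
    ∃ (L : Type) (_ : Field L) (_ : Algebra (RatFunc k) L)
      (_ : Algebra (Polynomial k) L)
      (_ : IsScalarTower (Polynomial k) (RatFunc k) L),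
      FiniteDimensional (RatFunc k) L ∧ IsGalois (RatFunc k) L ∧
      Nonempty ((L ≃ₐ[RatFunc k] L) ≃* alternatingGroup (Fin n)) ∧
      ∀ P : Ideal (Polynomial k), P.IsPrime → P ≠ ⊥ →
        ∀ Q : Ideal (integralClosure (Polynomial k) L), Q.IsPrime →
          Q.comap (algebraMap (Polynomial k) (integralClosure (Polynomial k) L)) = P →
          Ideal.ramificationIdx' P Q = 1 := by
  classical
  have hzi : Function.Injective (aeval z : k[X] →ₐ[k] L) := transcendental_iff_injective.mp hz
  let aX : Algebra k[X] L := ((aeval z : k[X] →ₐ[k] L) : k[X] →+* L).toAlgebra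
  let φ : RatFunc k →+* L := RatFunc.liftRingHom ((aeval z : k[X] →ₐ[k] L) : k[X] →+* L) (by
    intro p hp
    rw [Submonoid.mem_comap, mem_nonZeroDivisors_iff_ne_zero]
    have := nonZeroDivisors.ne_zero hp
    exact fun h => this (hzi (by rw [map_zero]; exact h)))
  let aR : Algebra (RatFunc k) L := φ.toAlgebra
  have hXz : algebraMap k[X] L X = z := aeval_X z
  have t1 : IsScalarTower k k[X] L := IsScalarTower.of_algebraMap_eq' (by
    ext a
    change algebraMap k L a = aeval z (C a)
    rw [aeval_C])
  have t2 : IsScalarTower k[X] (RatFunc k) L := IsScalarTower.of_algebraMap_eq' (by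
    apply RingHom.ext
    intro q
    change aeval z q = φ (algebraMap k[X] (RatFunc k) q)
    exact (RatFunc.liftRingHom_algebraMap _ _ q).symm)
  have t3 : IsScalarTower k (RatFunc k) L := IsScalarTower.of_algebraMap_eq' (by
    rw [IsScalarTower.algebraMap_eq k k[X] L, IsScalarTower.algebraMap_eq k[X] (RatFunc k) L, IsScalarTower.algebraMap_eq k k[X] (RatFunc k), RingHom.comp_assoc])
  have hXR : algebraMap (RatFunc k) L RatFunc.X = z := by
    rw [← hXz, IsScalarTower.algebraMap_apply k[X] (RatFunc k) L, RatFunc.algebraMap_X]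
  let F : (RatFunc k)[X] := h.map (algebraMap k (RatFunc k)) - C (RatFunc.X ^ e) * g.map (algebraMap k (RatFunc k))
  have hF : F.map (algebraMap (RatFunc k) L) = ∏ i, (X - C (r i)) := by
    rw [← H]
    simp only [F, Polynomial.map_sub, Polynomial.map_mul, map_C, Polynomial.map_map]
    rw [← IsScalarTower.algebraMap_eq, map_pow, hXR]
  have hsep : F.Separable := by
    rw [← separable_map (algebraMap (RatFunc k) L), hF, separable_prod_X_sub_C_iff]; exact hr
  have hF0 : F.map (algebraMap (RatFunc k) L) ≠ 0 := by
    rw [hF]; exact Finset.prod_ne_zero_iff.mpr fun i _ => X_sub_C_ne_zero _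
  have hgen2 : ∀ E : IntermediateField (RatFunc k) L, (∀ i, r i ∈ E) → E = ⊤ := by
    intro E hE
    have h1 : IntermediateField.adjoin k (insert z (Set.range r)) ≤ E.restrictScalars k := by
      rw [IntermediateField.adjoin_le_iff]
      rintro y (rfl | ⟨i, rfl⟩)
      · have := E.algebraMap_mem RatFunc.X
        rw [hXR] at this
        exact this
      · exact hE i
    rw [hgen] at h1
    rw [eq_top_iff]
    intro y _
    exact h1 (IntermediateField.mem_top (x := y))
  have hspl : F.IsSplittingField (RatFunc k) L := by
    rw [isSplittingField_iff_intermediateField]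
    refine ⟨?_, ?_⟩
    · rw [hF]; exact Splits.prod fun i _ => Splits.X_sub_C _
    · apply hgen2
      intro i
      apply IntermediateField.subset_adjoin
      rw [mem_rootSet_of_ne (by rintro h; rw [h] at hF0; simp at hF0), ← eval_map_algebraMap, hF, eval_prod]
      exact Finset.prod_eq_zero (Finset.mem_univ i) (by simp)
  have hfd : FiniteDimensional (RatFunc k) L := IsSplittingField.finiteDimensional L F
  have hgal : IsGalois (RatFunc k) L := IsGalois.of_separable_splitting_field hsep
  have hfix : ∀ σ : L ≃ₐ[RatFunc k] L, (∀ i, σ (r i) = r i) → σ = 1 := by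
    intro σ hσ
    have := hgen2 (IntermediateField.fixedField (Subgroup.zpowers σ)) (by
      intro i
      rw [IntermediateField.mem_fixedField_iff]
      intro f hf
      have : Subgroup.zpowers σ ≤ MulAction.stabilizer (L ≃ₐ[RatFunc k] L) (r i) := by
        rw [Subgroup.zpowers_le]; exact hσ i
      exact this hf)
    ext y
    have hy : y ∈ IntermediateField.fixedField (Subgroup.zpowers σ) := by rw [this]; trivial
    exact (IntermediateField.mem_fixedField_iff _ y).mp hy σ (Subgroup.mem_zpowers σ)
  rw [← hXz] at H hprim
  have htw : ∀ ζ : k, ζ ^ e = 1 → ∃ σ₀ : L ≃ₐ[k] L, σ₀ (algebraMap k[X] L X) = algebraMap k L ζ * algebraMap k[X] L X := by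
    rw [hXz]; exact htw
  have htop := perm_top hP H hr htw hg hprim
  refine ⟨L, inferInstance, aR, aX, t2, hfd, hgal, ?_, ?_⟩
  · apply galois_iso hP H hr hfix
    · obtain ⟨σ, hσ⟩ := htw (-1) (by rw [hP.even.neg_one_pow])
      exact ⟨σ, by rw [hσ]; simp⟩
    · intro π
      have : π ∈ permGrp k (algebraMap k[X] L X ^ e) r := by rw [htop]; trivial
      exact this
  · intro P hPp hP0 Q hQ hQP
    exact H.unram hP hfix P hPp hP0 Q hQ hQP

open Polynomial
set_option linter.unusedSectionVars false

theorem irr_lemma {k : Type} [Field k] {h g : k[X]} (hm : h.Monic) (hc : IsCoprime h g) (hd : g.natDegree < h.natDegree) :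
    Irreducible (h.map (algebraMap k (RatFunc k)) - C RatFunc.X * g.map (algebraMap k (RatFunc k))) ∧
    (h.map (algebraMap k (RatFunc k)) - C RatFunc.X * g.map (algebraMap k (RatFunc k))).Monic := by
  have hg0 : g ≠ 0 := by
    rintro rfl
    rw [isCoprime_zero_right] at hc
    have := natDegree_eq_zero_of_isUnit hc
    omega
  let φ : k[X][X] := h.map (algebraMap ..) - C X * g.map (algebraMap ..)
  have hφm : φ.Monic := by
    apply Monic.sub_of_left (hm.map _)
    calc degree (C X * g.map (algebraMap ..) : k[X][X]) = degree (g.map (algebraMap ..) : k[X][X]) := degree_C_mul X_ne_zero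
        _ ≤ degree g := degree_map_le
        _ < degree h := degree_lt_degree hd
        _ = degree (h.map (algebraMap ..) : k[X][X]) := (degree_map_eq_of_injective C_injective _).symm
  have hmap : φ.map (algebraMap k[X] (RatFunc k)) = h.map (algebraMap k (RatFunc k)) - C RatFunc.X * g.map (algebraMap k (RatFunc k)) := by
    simp only [φ, Polynomial.map_sub, Polynomial.map_mul, map_C, Polynomial.map_map, RatFunc.algebraMap_X]
    rw [← IsScalarTower.algebraMap_eq]
  rw [← hmap]
  refine ⟨?_, hφm.map _⟩
  rw [← hφm.irreducible_iff_irreducible_map_fraction_map]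
  have : φ = Bivariate.swap (C h - X * C g) := by
    rw [map_sub, map_mul, Bivariate.swap_C, Bivariate.swap_C, Bivariate.swap_Y]
    rfl
  rw [this, MulEquiv.irreducible_iff]
  have h2 := irreducible_C_mul_X_add_C (neg_ne_zero.mpr hg0)
      ((IsCoprime.neg_right_iff _ _).mpr hc).symm.isRelPrime
  have h3 : (C h - X * C g : k[X][X]) = C (-g) * X + C h := by
    rw [map_neg]; ring
  rw [h3]; exact h2

theorem splits_fin {L : Type} [Field L] {p : L[X]} (hp : p.Splits) (hm : p.Monic) :
    ∃ r : Fin p.natDegree → L, p = ∏ i, (X - C (r i)) := by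
  have hcard := hp.natDegree_eq_card_roots
  have hprod := hp.eq_prod_roots_of_monic hm
  have hl : p.roots.toList.length = p.natDegree := by rw [Multiset.length_toList, hcard]
  rw [← hl]
  refine ⟨fun i => p.roots.toList.get i, ?_⟩
  have : p = (p.roots.toList.map (fun a => X - C a)).prod := by
    conv_lhs => rw [hprod]
    rw [← Multiset.prod_toList]
    conv_lhs => rw [← Multiset.coe_toList p.roots]
    rw [Multiset.map_coe, Multiset.prod_toList, Multiset.prod_coe]
  rw [← List.prod_ofFn]
  conv_lhs => rw [this]
  congr 1
  rw [← List.ofFn_get (List.map _ _)]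
  apply List.ext_get <;> simp

section
variable {k : Type} [Field k] [IsAlgClosed k] {h g : k[X]} {e : ℕ} {L : Type} [Field L] [Algebra k L] [Algebra (RatFunc k) L] [IsScalarTower k (RatFunc k) L]

/-- indecomposability -/
def Indec (k : Type) [Field k] (h g : k[X]) : Prop :=
  ∀ E : IntermediateField k (RatFunc k), (algebraMap k[X] (RatFunc k) h / algebraMap k[X] (RatFunc k) g) ∈ E →
    RatFunc.X ∈ E ∨ E ≤ IntermediateField.adjoin k {algebraMap k[X] (RatFunc k) h / algebraMap k[X] (RatFunc k) g}

theorem transX : Transcendental k (algebraMap (RatFunc k) L RatFunc.X) := by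
  have h1 : Transcendental k (RatFunc.X : RatFunc k) := by
    rw [← RatFunc.algebraMap_X]
    intro h
    rw [isAlgebraic_algebraMap_iff (IsFractionRing.injective k[X] (RatFunc k))] at h
    exact transcendental_X k h
  intro h
  rw [isAlgebraic_algebraMap_iff (algebraMap (RatFunc k) L).injective] at h
  exact h1 h

theorem atom_lemma (hP : Pack k h g e) (hI : Indec k h g) {y : L} 
    (hy : aeval y h = algebraMap (RatFunc k) L RatFunc.X * aeval y g)
    (M : IntermediateField (RatFunc k) L) (hM : M ≤ IntermediateField.adjoin (RatFunc k) {y}) : M = ⊥ ∨ y ∈ M := by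
  set x := algebraMap (RatFunc k) L RatFunc.X with hx
  have hgy : aeval y g ≠ 0 := by
    intro hg
    rw [hg, mul_zero] at hy
    obtain ⟨u, v, huv⟩ := hP.cop
    have := congrArg (aeval y) huv
    simp [hg, hy] at this
  have hxy : x = aeval y h / aeval y g := by rw [hy, mul_div_cancel_right₀ _ hgy]
  have hyt : Transcendental k y := by
    intro hya
    apply transX (k := k) (L := L)
    rw [← hx, hxy]
    have h1 : ∀ f : k[X], IsAlgebraic k (aeval y f) := fun f => by
      have := hya.isIntegral
      exact (IsIntegral.of_mem_of_fg (Algebra.adjoin k {y}) this.fg_adjoin_singleton _ (aeval_mem_adjoin_singleton k y)).isAlgebraic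
    rw [div_eq_mul_inv]
    exact (h1 h).mul (h1 g).inv
  have hyi : Function.Injective (aeval y : k[X] →ₐ[k] L) := transcendental_iff_injective.mp hyt
  let φ : RatFunc k →ₐ[k] L := RatFunc.liftAlgHom (aeval y) (by
    intro p hp
    rw [Submonoid.mem_comap, mem_nonZeroDivisors_iff_ne_zero]
    have := nonZeroDivisors.ne_zero hp
    exact fun h => this (hyi (by rw [map_zero]; exact h)))
  have hφ : ∀ p : k[X], φ (algebraMap k[X] (RatFunc k) p) = aeval y p := by
    intro p
    have := RatFunc.liftAlgHom_apply_div (L := L) (φ := (aeval y : k[X] →ₐ[k] L)) (hφ := (by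
      intro p hp
      rw [Submonoid.mem_comap, mem_nonZeroDivisors_iff_ne_zero]
      have := nonZeroDivisors.ne_zero hp
      exact fun h => this (hyi (by rw [map_zero]; exact h)))) p 1
    simpa using this
  set f := algebraMap k[X] (RatFunc k) h / algebraMap k[X] (RatFunc k) g with hf
  have hφf : φ f = x := by rw [hf, map_div₀, hφ, hφ, hxy]
  have hφX : φ RatFunc.X = y := by rw [← RatFunc.algebraMap_X, hφ, aeval_X]
  let α : RatFunc k →ₐ[k] L := IsScalarTower.toAlgHom k (RatFunc k) L
  have hα : α.fieldRange = IntermediateField.adjoin k {x} := by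
    rw [AlgHom.fieldRange_eq_map, ← RatFunc.adjoin_X, IntermediateField.adjoin_map, Set.image_singleton]
    rfl
  have hφr : α.fieldRange ≤ φ.fieldRange := by
    rw [hα, IntermediateField.adjoin_le_iff, Set.singleton_subset_iff]
    exact ⟨f, hφf⟩
  have hMr : ∀ m ∈ M, m ∈ φ.fieldRange := by
    intro m hm
    let E' : IntermediateField (RatFunc k) L := φ.fieldRange.toSubfield.toIntermediateField (fun c => hφr ⟨c, rfl⟩)
    have : IntermediateField.adjoin (RatFunc k) {y} ≤ E' := by
      rw [IntermediateField.adjoin_le_iff, Set.singleton_subset_iff]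
      exact ⟨RatFunc.X, hφX⟩
    exact this (hM hm)
  rcases hI ((M.restrictScalars k).comap φ) (by
    change φ f ∈ M
    rw [hφf]; exact M.algebraMap_mem _) with h1 | h1
  · right
    change φ _ ∈ M at h1
    rwa [hφX] at h1
  · left
    rw [eq_bot_iff]
    intro m hm
    obtain ⟨c, rfl⟩ := hMr m hm
    have hc : c ∈ IntermediateField.adjoin k {f} := h1 hm
    have h2 : φ c ∈ (IntermediateField.adjoin k {f}).map φ := ⟨c, hc, rfl⟩
    rw [IntermediateField.adjoin_map, Set.image_singleton] at h2
    change φ c ∈ IntermediateField.adjoin k {φ f} at h2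
    rw [hφf, ← hα] at h2
    obtain ⟨d, hd⟩ := h2
    rw [IntermediateField.mem_bot]
    exact ⟨d, hd⟩

theorem build (hP : Pack k h g e) (hg : GrpCond h e h.natDegree) (hn : 2 ≤ h.natDegree) (hI : Indec k h g)
    [hS : IsSplittingField (RatFunc k) L ((h.map (algebraMap k (RatFunc k)) - C RatFunc.X * g.map (algebraMap k (RatFunc k))) * (X ^ e - C RatFunc.X))] :
    ∃ (L : Type) (_ : Field L) (_ : Algebra (RatFunc k) L)
      (_ : Algebra (Polynomial k) L)
      (_ : IsScalarTower (Polynomial k) (RatFunc k) L),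
      FiniteDimensional (RatFunc k) L ∧ IsGalois (RatFunc k) L ∧
      Nonempty ((L ≃ₐ[RatFunc k] L) ≃* alternatingGroup (Fin h.natDegree)) ∧
      ∀ P : Ideal (Polynomial k), P.IsPrime → P ≠ ⊥ →
        ∀ Q : Ideal (integralClosure (Polynomial k) L), Q.IsPrime →
          Q.comap (algebraMap (Polynomial k) (integralClosure (Polynomial k) L)) = P →
          Ideal.ramificationIdx' P Q = 1 := by
  classical
  set F := h.map (algebraMap k (RatFunc k)) - C RatFunc.X * g.map (algebraMap k (RatFunc k)) with hF
  set Fe : (RatFunc k)[X] := X ^ e - C RatFunc.X with hFe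
  set x := algebraMap (RatFunc k) L RatFunc.X with hx
  obtain ⟨hFirr, hFm⟩ := irr_lemma hP.monic hP.cop hP.deg
  rw [← hF] at hFirr hFm
  have hFeirr : Irreducible Fe ∧ Fe.Monic := by
    have := irr_lemma (k := k) (h := X ^ e) (g := 1) (monic_X_pow e) isCoprime_one_right (by
      rw [natDegree_one, natDegree_X_pow]; exact Nat.pos_of_ne_zero hP.e_ne)
    simpa using this
  obtain ⟨hFeirr, hFem⟩ := hFeirr
  have hFd : F.natDegree = h.natDegree := by
    rw [hF, natDegree_sub_eq_left_of_natDegree_lt, natDegree_map]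
    rw [natDegree_map]
    calc _ ≤ (g.map (algebraMap k (RatFunc k))).natDegree := natDegree_C_mul_le _ _
      _ = g.natDegree := natDegree_map _
      _ < _ := hP.deg
  have hne : F * Fe ≠ 0 := mul_ne_zero hFm.ne_zero hFem.ne_zero
  have hspl := hS.splits
  rw [Polynomial.map_mul] at hspl
  have hne' : (F.map (algebraMap (RatFunc k) L)) * (Fe.map (algebraMap (RatFunc k) L)) ≠ 0 := by
    rw [← Polynomial.map_mul]; exact (Polynomial.map_ne_zero_iff (algebraMap (RatFunc k) L).injective).mpr hne
  have hs1 : (F.map (algebraMap (RatFunc k) L)).Splits := hspl.of_dvd hne' (dvd_mul_right _ _)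
  have hs2 : (Fe.map (algebraMap (RatFunc k) L)).Splits := hspl.of_dvd hne' (dvd_mul_left _ _)
  obtain ⟨r, hr⟩ : ∃ r : Fin h.natDegree → L, F.map (algebraMap (RatFunc k) L) = ∏ i, (X - C (r i)) := by
    have := splits_fin hs1 (hFm.map _)
    rwa [natDegree_map, hFd] at this
  have hFsep : F.Separable := by
    rw [separable_iff_derivative_ne_zero hFirr]
    intro h0
    have hco : ∀ i, (derivative h).coeff i = 0 ∧ (derivative g).coeff i = 0 := by
      intro i
      have h1 := congrArg (fun p => coeff p i) h0
      simp only [hF, derivative_sub, derivative_mul, derivative_C, zero_mul, zero_add, derivative_map, coeff_sub, coeff_C_mul, coeff_map, coeff_zero] at h1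
      have h2 : algebraMap k[X] (RatFunc k) (C ((derivative h).coeff i)) = algebraMap k[X] (RatFunc k) (X * C ((derivative g).coeff i)) := by
        rw [map_mul, RatFunc.algebraMap_X, RatFunc.algebraMap_C, RatFunc.algebraMap_C]
        exact sub_eq_zero.mp h1
      have h3 := IsFractionRing.injective k[X] (RatFunc k) h2
      have h4 := congrArg (fun p => coeff p 0) h3
      have h5 := congrArg (fun p => coeff p 1) h3
      simp [coeff_C] at h4 h5
      exact ⟨h4, h5.symm⟩
    have h1 : derivative h = 0 := ext fun i => (hco i).1
    have h2 : derivative g = 0 := ext fun i => (hco i).2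
    have h3 : ∀ b, (h * g).eval b = 0 := fun b => by
      rw [eval_mul]
      by_cases hgb : g.eval b = 0
      · rw [hgb, mul_zero]
      · rw [hP.wr b hgb (by rw [h1, h2]; simp), zero_mul]
    have : Infinite k := IsAlgClosed.instInfinite
    have h4 : h * g = 0 := Polynomial.funext (by simpa using h3)
    rcases mul_eq_zero.mp h4 with h5 | h5
    · exact hP.monic.ne_zero h5
    · have h6 := hP.cop
      rw [h5, isCoprime_zero_right] at h6
      have := natDegree_eq_zero_of_isUnit h6
      have := hP.deg
      omega
  have hri : Function.Injective r := by
    rw [← separable_prod_X_sub_C_iff, ← hr]; exact hFsep.map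
  obtain ⟨z, hz⟩ : ∃ z : L, (Fe.map (algebraMap (RatFunc k) L)).eval z = 0 := by
    apply hs2.exists_eval_eq_zero
    rw [degree_map, hFe, degree_X_pow_sub_C (Nat.pos_of_ne_zero hP.e_ne)]
    exact_mod_cast hP.e_ne
  have hze : z ^ e = x := by
    simp only [hFe, Polynomial.map_sub, Polynomial.map_pow, map_X, map_C, eval_sub, eval_pow, eval_X, eval_C] at hz
    exact sub_eq_zero.mp hz
  have hzt : Transcendental k z := by
    intro hza
    apply transX (k := k) (L := L)
    rw [← hx, ← hze]; exact hza.pow e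
  have hz0 : z ≠ 0 := by
    rintro rfl
    exact hzt isAlgebraic_zero
  have H : RootSys h g e z r := by
    unfold RootSys
    rw [← hr, hze, hF]
    simp only [Polynomial.map_sub, Polynomial.map_mul, map_C, Polynomial.map_map]
    rw [← IsScalarTower.algebraMap_eq]
  have hadj := (isSplittingField_iff_intermediateField.mp hS).2
  have hrootS : ∀ y ∈ (F * Fe).rootSet L, (∃ i, y = r i) ∨ ∃ ζ : k, y = algebraMap k L ζ * z := by
    intro y hy
    rw [mem_rootSet_of_ne hne, map_mul, mul_eq_zero] at hy
    rcases hy with hy | hy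
    · left
      rw [← eval_map_algebraMap, hr, eval_prod] at hy
      obtain ⟨j, -, hj⟩ := Finset.prod_eq_zero_iff.mp hy
      exact ⟨j, by simpa [sub_eq_zero] using hj⟩
    · right
      have hye : y ^ e = x := by
        simp only [hFe, map_sub, map_pow, aeval_X, aeval_C] at hy
        exact sub_eq_zero.mp hy
      obtain ⟨ζ, hζ⟩ := exists_zeta (k := k) (y := y / z) hP.e0 (by
          rw [div_pow, hye, hze, div_self (by rw [← hze]; exact pow_ne_zero _ hz0)])
      exact ⟨ζ, by rw [hζ, div_mul_cancel₀ _ hz0]⟩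
  let α : RatFunc k →ₐ[k] L := IsScalarTower.toAlgHom k (RatFunc k) L
  have hα : α.fieldRange = IntermediateField.adjoin k {x} := by
    rw [AlgHom.fieldRange_eq_map, ← RatFunc.adjoin_X, IntermediateField.adjoin_map, Set.image_singleton]
    rfl
  have hgen : IntermediateField.adjoin k (insert z (Set.range r)) = ⊤ := by
    set E := IntermediateField.adjoin k (insert z (Set.range r)) with hE
    have hzE : z ∈ E := IntermediateField.subset_adjoin _ _ (Set.mem_insert _ _)
    have hrE : ∀ i, r i ∈ E := fun i => IntermediateField.subset_adjoin _ _ (Set.mem_insert_of_mem _ ⟨i, rfl⟩)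
    have hKE : α.fieldRange ≤ E := by
      rw [hα, IntermediateField.adjoin_le_iff, Set.singleton_subset_iff, ← hze]
      exact pow_mem hzE e
    let E' : IntermediateField (RatFunc k) L := E.toSubfield.toIntermediateField (fun c => hKE ⟨c, rfl⟩)
    have h1 : IntermediateField.adjoin (RatFunc k) ((F * Fe).rootSet L) ≤ E' := by
      rw [IntermediateField.adjoin_le_iff]
      intro y hy
      rcases hrootS y hy with ⟨i, rfl⟩ | ⟨ζ, rfl⟩
      · exact hrE i
      · exact E.mul_mem (E.algebraMap_mem ζ) hzE
    rw [hadj] at h1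
    rw [eq_top_iff]
    intro y _
    exact h1 (IntermediateField.mem_top (x := y))
  have hfd : FiniteDimensional (RatFunc k) L := IsSplittingField.finiteDimensional L (F * Fe)
  have hnor : Normal (RatFunc k) L := Normal.of_isSplittingField (F * Fe)
  have htwK : ∀ (p : (RatFunc k)[X]), Irreducible p → p.Monic → ∀ a b : L, aeval a p = 0 → aeval b p = 0 → ∃ σ : L ≃ₐ[RatFunc k] L, σ a = b := by
    intro p hp hm a b ha hb
    have h1 : minpoly (RatFunc k) b = minpoly (RatFunc k) a := by
      rw [← minpoly.eq_of_irreducible_of_monic hp ha hm, ← minpoly.eq_of_irreducible_of_monic hp hb hm]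
    obtain ⟨σ, hσ⟩ := (Normal.minpoly_eq_iff_mem_orbit L).mp h1
    exact ⟨σ, hσ⟩
  have hζroot : ∀ ζ : k, ζ ^ e = 1 → aeval (algebraMap k L ζ * z) Fe = 0 := by
    intro ζ hζ
    simp only [hFe, map_sub, map_pow, aeval_X, aeval_C, mul_pow]
    rw [← map_pow, hζ, map_one, one_mul, hze, sub_self]
  have htw : ∀ ζ : k, ζ ^ e = 1 → ∃ σ₀ : L ≃ₐ[k] L, σ₀ z = algebraMap k L ζ * z := by
    intro ζ hζ
    obtain ⟨σ, hσ⟩ := htwK Fe hFeirr hFem z _ (by simpa using hζroot 1 (one_pow e)) (hζroot ζ hζ)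
    exact ⟨σ.restrictScalars k, hσ⟩
  have hFr : ∀ i, aeval (r i) F = 0 := by
    intro i
    rw [← eval_map_algebraMap, hr, eval_prod]
    exact Finset.prod_eq_zero (Finset.mem_univ i) (by simp)
  have hsepL : Algebra.IsSeparable (RatFunc k) L := by
    have h1 : Algebra.IsSeparable (RatFunc k) (⊤ : IntermediateField (RatFunc k) L) := by
      rw [← hadj, IntermediateField.isSeparable_adjoin_iff_isSeparable]
      intro y hy
      rcases hrootS y hy with ⟨i, rfl⟩ | ⟨ζ, hζ⟩
      · exact hFsep.of_dvd (minpoly.dvd _ _ (hFr i))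
      · rw [mem_rootSet_of_ne hne, map_mul, mul_eq_zero] at hy
        rcases hy with hy | hy
        · exact hFsep.of_dvd (minpoly.dvd _ _ hy)
        · refine Separable.of_dvd ?_ (minpoly.dvd _ _ hy)
          refine separable_X_pow_sub_C _ ?_ RatFunc.X_ne_zero
          have := (_root_.map_ne_zero (algebraMap k (RatFunc k))).mpr hP.e0
          rwa [map_natCast] at this
    exact Algebra.IsSeparable.of_algHom (RatFunc k) _ (IntermediateField.topEquiv.symm : L ≃ₐ[RatFunc k] _).toAlgHom
  have hgal : IsGalois (RatFunc k) L := ⟨⟩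
  -- action
  have hperm : ∀ η : L ≃ₐ[RatFunc k] L, ∃ π : Equiv.Perm (Fin h.natDegree), ∀ i, η (r i) = r (π i) := by
    intro η
    exact H.perm hri (η.restrictScalars k : L →ₐ[k] L) (by rw [hze]; exact η.commutes _)
  choose f hf using hperm
  let ψ : (L ≃ₐ[RatFunc k] L) →* Equiv.Perm (Fin h.natDegree) := MonoidHom.mk' f (by
    intro a b
    ext i : 1
    apply hri
    rw [← hf, Equiv.Perm.mul_apply, AlgEquiv.mul_apply, hf, hf])
  have hψ : ∀ σ i, σ (r i) = r (ψ σ i) := hf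
  let act : MulAction (L ≃ₐ[RatFunc k] L) (Fin h.natDegree) := MulAction.compHom _ ψ
  have hact : ∀ (σ : L ≃ₐ[RatFunc k] L) (i : Fin h.natDegree), σ • i = ψ σ i := fun σ i => rfl
  have htrans : MulAction.IsPretransitive (L ≃ₐ[RatFunc k] L) (Fin h.natDegree) := by
    constructor
    intro i j
    obtain ⟨σ, hσ⟩ := htwK F hFirr hFm (r i) (r j) (hFr i) (hFr j)
    refine ⟨σ, hri ?_⟩
    rw [hact, ← hψ, hσ]
  have hnt : Nontrivial (Fin h.natDegree) := Fin.nontrivial_iff_two_le.mpr hn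
  have hpr : MulAction.IsPreprimitive (L ≃ₐ[RatFunc k] L) (Fin h.natDegree) := by
    let i₀ : Fin h.natDegree := ⟨0, by omega⟩
    rw [← MulAction.isCoatom_stabilizer_iff_preprimitive _ i₀]
    have hstab : MulAction.stabilizer (L ≃ₐ[RatFunc k] L) i₀ = (IntermediateField.adjoin (RatFunc k) {r i₀}).fixingSubgroup := by
      ext σ
      rw [MulAction.mem_stabilizer_iff, hact, ← hri.eq_iff, ← hψ]
      constructor
      · intro h1
        rw [IntermediateField.mem_fixingSubgroup_iff]
        have h2 : IntermediateField.adjoin (RatFunc k) {r i₀} ≤ IntermediateField.fixedField (Subgroup.zpowers σ) := by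
          rw [IntermediateField.adjoin_le_iff, Set.singleton_subset_iff]
          change r i₀ ∈ IntermediateField.fixedField (Subgroup.zpowers σ)
          rw [IntermediateField.mem_fixedField_iff]
          intro f hf
          have : Subgroup.zpowers σ ≤ MulAction.stabilizer (L ≃ₐ[RatFunc k] L) (r i₀) := by
            rw [Subgroup.zpowers_le]; exact h1
          exact this hf
        intro y hy
        exact (IntermediateField.mem_fixedField_iff _ y).mp (h2 hy) σ (Subgroup.mem_zpowers σ)
      · intro h1
        rw [IntermediateField.mem_fixingSubgroup_iff] at h1
        exact h1 _ (IntermediateField.mem_adjoin_simple_self _ _)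
    rw [hstab]
    constructor
    · intro htop
      obtain ⟨j, hj⟩ := exists_ne i₀
      obtain ⟨σ, hσ⟩ := MulAction.exists_smul_eq (L ≃ₐ[RatFunc k] L) i₀ j
      have : σ ∈ MulAction.stabilizer (L ≃ₐ[RatFunc k] L) i₀ := by rw [hstab, htop]; trivial
      rw [MulAction.mem_stabilizer_iff, hσ] at this
      exact hj this
    · intro S hS
      have hle : IntermediateField.fixedField S ≤ IntermediateField.adjoin (RatFunc k) {r i₀} := by
        rw [← IsGalois.fixedField_fixingSubgroup (IntermediateField.adjoin (RatFunc k) {r i₀})]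
        intro y hy
        rw [IntermediateField.mem_fixedField_iff] at hy ⊢
        exact fun f hf => hy f (hS.le hf)
      rcases atom_lemma hP hI (by rw [← hx, ← hze]; exact H.root i₀) _ hle with h1 | h1
      · rw [← IntermediateField.fixingSubgroup_fixedField S, h1]
        exact IntermediateField.fixingSubgroup_bot
      · exfalso
        apply hS.not_ge
        rw [← hstab]
        intro σ hσ
        rw [MulAction.mem_stabilizer_iff, hact, ← hri.eq_iff, ← hψ]
        rw [IntermediateField.mem_fixedField_iff] at h1
        exact h1 σ hσ
  refine finish hP hg L z hzt r hri H hgen htw ?_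
  rw [hze]
  let φ : (L ≃ₐ[RatFunc k] L) → permGrp k x r := fun σ => ⟨ψ σ, σ.restrictScalars k, σ.commutes _, hψ σ⟩
  let ff : Fin h.natDegree →ₑ[φ] Fin h.natDegree := { toFun := id, map_smul' := fun σ i => rfl }
  exact MulAction.IsPreprimitive.of_surjective (f := ff) Function.surjective_id
end

theorem main_of_pack {k : Type} [Field k] [IsAlgClosed k] {h g : k[X]} {e n : ℕ} (hP : Pack k h g e) (hn' : h.natDegree = n) (hg : GrpCond h e n) (hn : 2 ≤ n) (hI : Indec k h g) :
    ∃ (L : Type) (_ : Field L) (_ : Algebra (RatFunc k) L)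
      (_ : Algebra (Polynomial k) L)
      (_ : IsScalarTower (Polynomial k) (RatFunc k) L),
      FiniteDimensional (RatFunc k) L ∧ IsGalois (RatFunc k) L ∧
      Nonempty ((L ≃ₐ[RatFunc k] L) ≃* alternatingGroup (Fin n)) ∧
      ∀ P : Ideal (Polynomial k), P.IsPrime → P ≠ ⊥ →
        ∀ Q : Ideal (integralClosure (Polynomial k) L), Q.IsPrime →
          Q.comap (algebraMap (Polynomial k) (integralClosure (Polynomial k) L)) = P →
          Ideal.ramificationIdx' P Q = 1 := by
  subst hn'
  exact build (L := SplittingField ((h.map (algebraMap k (RatFunc k)) - C RatFunc.X * g.map (algebraMap k (RatFunc k))) * (X ^ e - C RatFunc.X))) hP hg hn hI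

open Polynomial
set_option linter.unusedSectionVars false

section
variable {k : Type} [Field k] [IsAlgClosed k]

theorem hom_lemma {u v : k[X]} (huv : IsCoprime u v) (hd : v.natDegree < u.natDegree) (P : k[X]) (hP : P ≠ 0) :
    ∃ H : k[X], algebraMap k[X] (RatFunc k) H =
        aeval (algebraMap k[X] (RatFunc k) u / algebraMap k[X] (RatFunc k) v) P * (algebraMap k[X] (RatFunc k) v) ^ P.natDegree ∧
      H.natDegree = P.natDegree * u.natDegree ∧ H ≠ 0 ∧
      (∀ y, H.eval y = 0 → ∃ α, P.eval α = 0 ∧ u.eval y = α * v.eval y) ∧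
      (∀ α, P.eval α = 0 → (u - C α * v) ∣ H) := by
  have hv : v ≠ 0 := by
    rintro rfl
    rw [isCoprime_zero_right] at huv
    have := natDegree_eq_zero_of_isUnit huv
    omega
  have hv' : algebraMap k[X] (RatFunc k) v ≠ 0 := by
    simpa using hv
  have hdeg : ∀ α, (u - C α * v).natDegree = u.natDegree := by
    intro α
    apply natDegree_sub_eq_left_of_natDegree_lt
    exact (natDegree_C_mul_le _ _).trans_lt hd
  have hne : ∀ α, u - C α * v ≠ 0 := by
    intro α h0
    have := hdeg α
    rw [h0] at this; simp at this; omega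
  have hs : P.Splits := IsAlgClosed.splits P
  have hcard : P.natDegree = P.roots.card := hs.natDegree_eq_card_roots
  have hprod : P = C P.leadingCoeff * (P.roots.map (X - C ·)).prod := hs.eq_prod_roots
  refine ⟨C P.leadingCoeff * (P.roots.map (fun α => u - C α * v)).prod, ?_, ?_, ?_, ?_, ?_⟩
  · conv_rhs => rw [hprod]
    rw [map_mul, map_mul, map_multiset_prod, map_multiset_prod, Multiset.map_map, Multiset.map_map, mul_assoc]
    congr 1
    · simp [RatFunc.algebraMap_C]
    · rw [← hprod, hcard]
      induction P.roots using Multiset.induction with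
      | empty => simp
      | cons a s ih =>
        simp only [Multiset.map_cons, Multiset.prod_cons, Multiset.card_cons, pow_succ]
        rw [ih]
        have : (algebraMap k[X] (RatFunc k)) (u - C a * v) = (aeval (algebraMap k[X] (RatFunc k) u / algebraMap k[X] (RatFunc k) v)) (X - C a) * algebraMap k[X] (RatFunc k) v := by
          simp only [map_sub, map_mul, aeval_X, aeval_C, RatFunc.algebraMap_C]
          rw [sub_mul, div_mul_cancel₀ _ hv']; rfl
        simp only [Function.comp]
        rw [this]; ring
  · rw [natDegree_C_mul (leadingCoeff_ne_zero.mpr hP), natDegree_multiset_prod _ (by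
      rw [Multiset.mem_map]; rintro ⟨a, _, ha⟩; exact hne a ha), Multiset.map_map, hcard]
    simp [hdeg]
  · refine mul_ne_zero (by simpa using hP) (Multiset.prod_ne_zero ?_)
    rw [Multiset.mem_map]; rintro ⟨a, _, ha⟩; exact hne a ha
  · intro y hy
    rw [eval_mul, eval_C, mul_eq_zero, or_iff_right (leadingCoeff_ne_zero.mpr hP), eval_multiset_prod, Multiset.prod_eq_zero_iff, Multiset.map_map, Multiset.mem_map] at hy
    obtain ⟨a, ha, h0⟩ := hy
    refine ⟨a, (mem_roots'.mp ha).2, ?_⟩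
    simpa [sub_eq_zero] using h0
  · intro α hα
    apply Dvd.dvd.mul_left
    apply Multiset.dvd_prod
    rw [Multiset.mem_map]
    exact ⟨α, mem_roots'.mpr ⟨hP, hα⟩, rfl⟩

theorem coprime_iff_noroot {a b : k[X]} : IsCoprime a b ↔ ∀ y, ¬ (a.eval y = 0 ∧ b.eval y = 0) := by
  rw [Polynomial.isCoprime_iff_aeval_ne_zero_of_isAlgClosed k k]
  simp only [coe_aeval_eq_eval]
  grind

open IntermediateField in
theorem gen_lemma (E : IntermediateField k (RatFunc k)) (hE : E ≠ ⊥) :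
    ∃ u v : k[X], IsCoprime u v ∧ v.natDegree < u.natDegree ∧
      E = adjoin k {algebraMap k[X] (RatFunc k) u / algebraMap k[X] (RatFunc k) v} := by
  set f := RatFunc.Luroth.generator E with hf
  have hE' : E = k⟮f⟯ := RatFunc.Luroth.eq_adjoin_generator
  have hfC : ¬ ∃ c, f = RatFunc.C c := RatFunc.Luroth.generator_ne_C hE
  have hnd : f = algebraMap k[X] (RatFunc k) f.num / algebraMap k[X] (RatFunc k) f.denom := (RatFunc.num_div_denom f).symm
  have hco := f.isCoprime_num_denom
  have hd0 := f.denom_ne_zero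
  by_cases h1 : f.denom.natDegree < f.num.natDegree
  · exact ⟨f.num, f.denom, hco, h1, by rw [← hnd, ← hE']⟩
  push Not at h1
  set d := f.denom.natDegree with hd
  let c := f.num.coeff d / f.denom.leadingCoeff
  have hw0 : f.num - C c * f.denom ≠ 0 := by
    intro h0
    apply hfC
    refine ⟨c, ?_⟩
    rw [hnd, sub_eq_zero.mp h0, map_mul, RatFunc.algebraMap_C, mul_div_cancel_right₀]
    simpa using hd0
  have hco' : IsCoprime f.denom (f.num - C c * f.denom) := by
    rw [sub_eq_add_neg, ← neg_mul]
    exact (IsCoprime.add_mul_right_right hco.symm _)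
  have hle : (f.num - C c * f.denom).natDegree ≤ d := by
    apply (natDegree_sub_le _ _).trans
    exact max_le h1 (natDegree_C_mul_le _ _)
  have hcoef : (f.num - C c * f.denom).coeff d = 0 := by
    rw [coeff_sub, coeff_C_mul]
    simp only [c]
    rw [hd, coeff_natDegree, div_mul_cancel₀, sub_self]
    simpa using hd0
  have hlt : (f.num - C c * f.denom).natDegree < d := by
    apply lt_of_le_of_ne hle
    intro h0
    apply hw0
    rw [← leadingCoeff_eq_zero, leadingCoeff, h0, hcoef]
  refine ⟨f.denom, f.num - C c * f.denom, hco', hlt, ?_⟩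
  have hd0' : algebraMap k[X] (RatFunc k) f.denom ≠ 0 := by simpa using hd0
  have hw0' : algebraMap k[X] (RatFunc k) (f.num - C c * f.denom) ≠ 0 := (map_ne_zero_iff _ (IsFractionRing.injective k[X] (RatFunc k))).mpr hw0
  have hkey : algebraMap k[X] (RatFunc k) f.denom / algebraMap k[X] (RatFunc k) (f.num - C c * f.denom) = (f - algebraMap k (RatFunc k) c)⁻¹ := by
    conv_rhs => rw [hnd]
    have : algebraMap k (RatFunc k) c = algebraMap k[X] (RatFunc k) (C c) := by rw [RatFunc.algebraMap_C]; rfl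
    rw [this, ← inv_div, map_sub, map_mul]
    congr 1
    rw [sub_div, mul_div_cancel_right₀ _ hd0']
  rw [hkey, hE']
  apply le_antisymm
  · rw [adjoin_simple_le_iff]
    have h2 : (f - algebraMap k (RatFunc k) c)⁻¹ ∈ k⟮(f - algebraMap k (RatFunc k) c)⁻¹⟯ := mem_adjoin_simple_self _ _
    have h3 := add_mem (inv_mem h2) (IntermediateField.algebraMap_mem k⟮(f - algebraMap k (RatFunc k) c)⁻¹⟯ c)
    simpa using h3
  · rw [adjoin_simple_le_iff]
    exact inv_mem (sub_mem (mem_adjoin_simple_self _ _) (IntermediateField.algebraMap_mem _ c))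

open IntermediateField in
theorem decomp {h g : k[X]} (hm : h.Monic) (hc : IsCoprime h g) (hd : g.natDegree < h.natDegree)
    (E : IntermediateField k (RatFunc k))
    (hx : algebraMap k[X] (RatFunc k) h / algebraMap k[X] (RatFunc k) g ∈ E) :
    ∃ u v P Q : k[X], IsCoprime u v ∧ v.natDegree < u.natDegree ∧
      E = adjoin k {algebraMap k[X] (RatFunc k) u / algebraMap k[X] (RatFunc k) v} ∧
      Q.natDegree < P.natDegree ∧ h.natDegree = P.natDegree * u.natDegree ∧
      g.natDegree = Q.natDegree * u.natDegree + (P.natDegree - Q.natDegree) * v.natDegree ∧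
      (∀ β, Q.eval β = 0 → (u - C β * v) ∣ g) ∧ v ∣ g ∧ Q ≠ 0 ∧
      algebraMap k[X] (RatFunc k) h / algebraMap k[X] (RatFunc k) g =
        aeval (algebraMap k[X] (RatFunc k) u / algebraMap k[X] (RatFunc k) v) P /
        aeval (algebraMap k[X] (RatFunc k) u / algebraMap k[X] (RatFunc k) v) Q := by
  have hg0 : g ≠ 0 := by
    rintro rfl
    rw [isCoprime_zero_right] at hc
    have := natDegree_eq_zero_of_isUnit hc
    omega
  have hg0' : algebraMap k[X] (RatFunc k) g ≠ 0 := by simpa using hg0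
  have hh0' : algebraMap k[X] (RatFunc k) h ≠ 0 := by simpa using hm.ne_zero
  have hE : E ≠ ⊥ := by
    rintro rfl
    rw [IntermediateField.mem_bot] at hx
    obtain ⟨c, hx⟩ := hx
    rw [eq_div_iff hg0'] at hx
    have : algebraMap k (RatFunc k) c = algebraMap k[X] (RatFunc k) (C c) := by rw [RatFunc.algebraMap_C]; rfl
    rw [this, ← map_mul] at hx
    have h1 := IsFractionRing.injective k[X] (RatFunc k) hx
    have := natDegree_C_mul_le c g
    rw [h1] at this
    omega
  obtain ⟨u, v, huv, hlt, hEq⟩ := gen_lemma E hE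
  set f := algebraMap k[X] (RatFunc k) u / algebraMap k[X] (RatFunc k) v with hf
  have hv : v ≠ 0 := by
    rintro rfl
    rw [isCoprime_zero_right] at huv
    have := natDegree_eq_zero_of_isUnit huv
    omega
  have hv' : algebraMap k[X] (RatFunc k) v ≠ 0 := by simpa using hv
  have hx2 := hx
  rw [hEq, mem_adjoin_simple_iff] at hx2
  obtain ⟨r, s, hrs⟩ := hx2
  have hs0 : aeval f s ≠ 0 := by
    intro h0; rw [h0, div_zero] at hrs; exact (div_ne_zero hh0' hg0') hrs
  have hr0 : aeval f r ≠ 0 := by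
    intro h0; rw [h0, zero_div] at hrs; exact (div_ne_zero hh0' hg0') hrs
  have hs1 : s ≠ 0 := by rintro rfl; simp at hs0
  obtain ⟨P, Q, hPQ, hG⟩ : ∃ P Q : k[X], IsCoprime P Q ∧ ∃ G, r = G * P ∧ s = G * Q := by
    classical
    have hgcd : EuclideanDomain.gcd r s ≠ 0 := by
      intro h0; rw [EuclideanDomain.gcd_eq_zero_iff] at h0; exact hs1 h0.2
    obtain ⟨P, hP⟩ := EuclideanDomain.gcd_dvd_left r s
    obtain ⟨Q, hQ⟩ := EuclideanDomain.gcd_dvd_right r s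
    refine ⟨P, Q, ?_, _, hP, hQ⟩
    have hb := EuclideanDomain.gcd_eq_gcd_ab r s
    refine ⟨EuclideanDomain.gcdA r s, EuclideanDomain.gcdB r s, ?_⟩
    apply mul_left_cancel₀ hgcd
    calc _ = EuclideanDomain.gcd r s * P * EuclideanDomain.gcdA r s + EuclideanDomain.gcd r s * Q * EuclideanDomain.gcdB r s := by ring
      _ = r * EuclideanDomain.gcdA r s + s * EuclideanDomain.gcdB r s := by rw [← hP, ← hQ]
      _ = _ := by rw [← hb, mul_one]
  obtain ⟨G, rfl, rfl⟩ := hG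
  rw [map_mul] at hs0 hr0
  have hPf := right_ne_zero_of_mul hr0
  have hQf := right_ne_zero_of_mul hs0
  have hGf := left_ne_zero_of_mul hs0
  have hP0 : P ≠ 0 := by rintro rfl; simp at hPf
  have hQ0 : Q ≠ 0 := by rintro rfl; simp at hQf
  rw [map_mul, map_mul, mul_div_mul_left _ _ hGf] at hrs
  obtain ⟨HP, hHP, hHPd, hHP0, hHPr, hHPdv⟩ := hom_lemma huv hlt P hP0
  obtain ⟨HQ, hHQ, hHQd, hHQ0, hHQr, hHQdv⟩ := hom_lemma huv hlt Q hQ0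
  rw [← hf] at hHP hHQ
  have key : h * HQ * v ^ P.natDegree = g * HP * v ^ Q.natDegree := by
    apply IsFractionRing.injective k[X] (RatFunc k)
    simp only [map_mul, map_pow, hHP, hHQ]
    rw [div_eq_div_iff hg0' hQf] at hrs
    linear_combination (algebraMap k[X] (RatFunc k) v) ^ P.natDegree * (algebraMap k[X] (RatFunc k) v) ^ Q.natDegree * hrs
  have hst : Q.natDegree < P.natDegree := by
    by_contra hcon
    push Not at hcon
    have h1 := congrArg natDegree key
    rw [natDegree_mul (mul_ne_zero hm.ne_zero hHQ0) (pow_ne_zero _ hv), natDegree_mul hm.ne_zero hHQ0,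
      natDegree_mul (mul_ne_zero hg0 hHP0) (pow_ne_zero _ hv), natDegree_mul hg0 hHP0, hHPd, hHQd, natDegree_pow, natDegree_pow] at h1
    obtain ⟨w, hw⟩ := Nat.exists_eq_add_of_le hcon
    rw [hw] at h1
    nlinarith [Nat.mul_le_mul_left w hlt.le]
  have key2 : h * (HQ * v ^ (P.natDegree - Q.natDegree)) = g * HP := by
    apply mul_right_cancel₀ (pow_ne_zero Q.natDegree hv)
    rw [← key]
    have : v ^ P.natDegree = v ^ (P.natDegree - Q.natDegree) * v ^ Q.natDegree := by
      rw [← pow_add]; congr 1; omega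
    rw [this]; ring
  have hnov : ∀ y, ¬ (u.eval y = 0 ∧ v.eval y = 0) := coprime_iff_noroot.mp huv
  have c1 : IsCoprime HP (HQ * v ^ (P.natDegree - Q.natDegree)) := by
    rw [coprime_iff_noroot]
    rintro y ⟨h1, h2⟩
    obtain ⟨α, hα, h3⟩ := hHPr y h1
    have hvy : v.eval y ≠ 0 := fun h0 => hnov y ⟨by rw [h3, h0, mul_zero], h0⟩
    rw [eval_mul, mul_eq_zero, eval_pow] at h2
    rcases h2 with h2 | h2
    · obtain ⟨β, hβ, h4⟩ := hHQr y h2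
      have : α = β := mul_right_cancel₀ hvy (h3.symm.trans h4)
      exact coprime_iff_noroot.mp hPQ α ⟨hα, this ▸ hβ⟩
    · exact hvy ((pow_eq_zero_iff (by omega)).mp h2)
  have a1 : Associated h HP := by
    apply associated_of_dvd_dvd
    · exact hc.dvd_of_dvd_mul_left ⟨_, key2.symm⟩
    · exact c1.dvd_of_dvd_mul_right ⟨g, by rw [key2]; ring⟩
  have a2 : Associated g (HQ * v ^ (P.natDegree - Q.natDegree)) := by
    apply associated_of_dvd_dvd
    · exact hc.symm.dvd_of_dvd_mul_left ⟨_, key2⟩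
    · exact c1.symm.dvd_of_dvd_mul_right ⟨h, by rw [← key2]; ring⟩
  refine ⟨u, v, P, Q, huv, hlt, hEq, hst, ?_, ?_, ?_, ?_, hQ0, hrs⟩
  · rw [natDegree_eq_of_degree_eq (degree_eq_degree_of_associated a1), hHPd]
  · rw [natDegree_eq_of_degree_eq (degree_eq_degree_of_associated a2), natDegree_mul hHQ0 (pow_ne_zero _ hv), hHQd, natDegree_pow]
  · intro β hβ
    exact ((hHQdv β hβ).mul_right _).trans a2.symm.dvd
  · exact ((dvd_pow_self v (by omega)).mul_left _).trans a2.symm.dvd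

open IntermediateField in
/-- degree-one generator gives everything -/
theorem X_mem_of_deg_one {u v : k[X]} (hu : u.natDegree = 1) (hv : v.natDegree = 0) (hv0 : v ≠ 0) :
    (RatFunc.X : RatFunc k) ∈ adjoin k {algebraMap k[X] (RatFunc k) u / algebraMap k[X] (RatFunc k) v} := by
  obtain ⟨a, ha⟩ := natDegree_eq_zero.mp hv
  have ha0 : a ≠ 0 := by rintro rfl; simp at ha; exact hv0 ha.symm
  obtain ⟨b, hb, c, hu'⟩ := natDegree_eq_one.mp hu
  have hC : ∀ c : k, algebraMap k[X] (RatFunc k) (C c) = algebraMap k (RatFunc k) c := fun c => by rw [RatFunc.algebraMap_C]; rfl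
  set f := algebraMap k[X] (RatFunc k) u / algebraMap k[X] (RatFunc k) v with hf
  have ha' : algebraMap k (RatFunc k) a ≠ 0 := by simpa using ha0
  have hb' : algebraMap k (RatFunc k) b ≠ 0 := by simpa using hb
  have : (RatFunc.X : RatFunc k) = (f * algebraMap k (RatFunc k) a - algebraMap k (RatFunc k) c) / algebraMap k (RatFunc k) b := by
    rw [hf, ← ha, ← hu', hC, div_mul_cancel₀ _ ha', map_add, map_mul, hC, hC, RatFunc.algebraMap_X]
    field_simp
    ring
  rw [this]
  exact div_mem (sub_mem (mul_mem (mem_adjoin_simple_self _ _) (IntermediateField.algebraMap_mem _ _)) (IntermediateField.algebraMap_mem _ _)) (IntermediateField.algebraMap_mem _ _)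

open IntermediateField in
theorem gen_mem_of_deg_one {x f : RatFunc k} {P Q : k[X]} (hP : P.natDegree = 1) (hQ : Q.natDegree = 0) (hQ0 : Q ≠ 0)
    (hx : x = aeval f P / aeval f Q) : adjoin k {f} ≤ adjoin k {x} := by
  obtain ⟨a, ha⟩ := natDegree_eq_zero.mp hQ
  have ha0 : a ≠ 0 := by rintro rfl; simp at ha; exact hQ0 ha.symm
  obtain ⟨b, hb, c, hu'⟩ := natDegree_eq_one.mp hP
  have ha' : algebraMap k (RatFunc k) a ≠ 0 := by simpa using ha0
  have hb' : algebraMap k (RatFunc k) b ≠ 0 := by simpa using hb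
  rw [← ha, ← hu'] at hx
  simp only [map_add, map_mul, aeval_C, aeval_X] at hx
  have : f = (x * algebraMap k (RatFunc k) a - algebraMap k (RatFunc k) c) / algebraMap k (RatFunc k) b := by
    rw [hx, div_mul_cancel₀ _ ha']
    field_simp
    ring
  rw [adjoin_simple_le_iff, this]
  exact div_mem (sub_mem (mul_mem (mem_adjoin_simple_self _ _) (IntermediateField.algebraMap_mem _ _)) (IntermediateField.algebraMap_mem _ _)) (IntermediateField.algebraMap_mem _ _)

theorem indec_pow {h : k[X]} {c : k} {b : ℕ} (hm : h.Monic) (hc : IsCoprime h ((X - C c) ^ b)) (hd : b < h.natDegree)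
    (hb : Nat.Coprime b h.natDegree) : Indec k h ((X - C c) ^ b) := by
  intro E hx
  have hgd : ((X - C c) ^ b).natDegree = b := by rw [natDegree_pow, natDegree_X_sub_C, mul_one]
  obtain ⟨u, v, P, Q, huv, hlt, hE, hst, hhd, hgd', hdiv, hvg, hQ0, hxx⟩ := decomp hm hc (by omega) E hx
  have hv : v ≠ 0 := by
    rintro rfl
    rw [isCoprime_zero_right] at huv
    have := natDegree_eq_zero_of_isUnit huv
    omega
  rw [hgd] at hgd'
  by_cases hQ : Q.natDegree = 0
  · right
    rw [hQ] at hgd'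
    have h1 : P.natDegree ∣ b := ⟨v.natDegree, by rw [hgd']; simp⟩
    have h2 : P.natDegree ∣ h.natDegree := ⟨_, hhd⟩
    have h3 := Nat.eq_one_of_dvd_coprimes hb h1 h2
    rw [hE]
    exact gen_mem_of_deg_one h3 hQ hQ0 hxx
  · left
    obtain ⟨β, hβ⟩ := IsAlgClosed.exists_root Q (by rw [degree_eq_natDegree hQ0]; exact_mod_cast hQ)
    have h1 := hdiv β hβ
    have hroot : ∀ w : k[X], w ∣ (X - C c) ^ b → w.natDegree ≠ 0 → w.eval c = 0 := by
      intro w hw hw0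
      obtain ⟨y, hy⟩ := IsAlgClosed.exists_root w (by
        rw [degree_eq_natDegree (by rintro rfl; simp at hw0)]; exact_mod_cast hw0)
      have h2 : ((X - C c) ^ b).eval y = 0 := eval_eq_zero_of_dvd_of_eval_eq_zero hw hy
      rw [eval_pow] at h2
      have h3 := eq_zero_of_pow_eq_zero h2
      simp [sub_eq_zero] at h3
      rw [← h3]; exact hy
    have hv0 : v.natDegree = 0 := by
      by_contra h0
      have h2 := hroot v hvg h0
      have h3 := hroot _ h1 (by
        rw [natDegree_sub_eq_left_of_natDegree_lt ((natDegree_C_mul_le _ _).trans_lt hlt)]; omega)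
      rw [eval_sub, eval_mul, h2, mul_zero, sub_zero] at h3
      exact coprime_iff_noroot.mp huv c ⟨h3, h2⟩
    rw [hv0, mul_zero, add_zero] at hgd'
    have h3 := Nat.eq_one_of_dvd_coprimes hb ⟨Q.natDegree, by rw [hgd', mul_comm]⟩ ⟨P.natDegree, by rw [hhd, mul_comm]⟩
    rw [hE]
    exact X_mem_of_deg_one h3 hv0 hv

/-- polynomial case -/
theorem indec_one {h : k[X]} (hm : h.Monic) (hd : 0 < h.natDegree)
    (hdec : ∀ P u : k[X], h = P.comp u → P.natDegree = 1 ∨ u.natDegree = 1) : Indec k h 1 := by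
  intro E hx
  obtain ⟨u, v, P, Q, huv, hlt, hE, hst, hhd, hgd', hdiv, hvg, hQ0, hxx⟩ := decomp hm isCoprime_one_right (by simpa using hd) E hx
  have hv : v ≠ 0 := by
    rintro rfl
    rw [isCoprime_zero_right] at huv
    have := natDegree_eq_zero_of_isUnit huv
    omega
  rw [natDegree_one] at hgd'
  have hQ : Q.natDegree = 0 := by
    have : Q.natDegree * u.natDegree = 0 := by omega
    rcases mul_eq_zero.mp this with h | h <;> omega
  have hvd : v.natDegree = 0 := by
    have : (P.natDegree - Q.natDegree) * v.natDegree = 0 := by omega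
    rcases mul_eq_zero.mp this with h | h <;> omega
  obtain ⟨a, ha⟩ := natDegree_eq_zero.mp hvd
  have ha0 : a ≠ 0 := by rintro rfl; simp at ha; exact hv ha.symm
  obtain ⟨b, hb⟩ := natDegree_eq_zero.mp hQ
  have hb0 : b ≠ 0 := by rintro rfl; simp at hb; exact hQ0 hb.symm
  have hC : ∀ c : k, algebraMap k (RatFunc k) c = algebraMap k[X] (RatFunc k) (C c) := fun c => by rw [RatFunc.algebraMap_C]; rfl
  have hb' : algebraMap k (RatFunc k) b ≠ 0 := by simpa using hb0
  have ha' : algebraMap k (RatFunc k) a ≠ 0 := by simpa using ha0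
  have hf : algebraMap k[X] (RatFunc k) u / algebraMap k[X] (RatFunc k) v = algebraMap k[X] (RatFunc k) (C a⁻¹ * u) := by
    rw [← ha, ← hC, map_mul, ← hC, map_inv₀, div_eq_inv_mul]
  have hcomp : h = (C b⁻¹ * P).comp (C a⁻¹ * u) := by
    apply IsFractionRing.injective k[X] (RatFunc k)
    rw [map_one, div_one, hf] at hxx
    rw [hxx, ← hb, aeval_C, aeval_algebraMap_apply, mul_comp, C_comp, map_mul _ (C b⁻¹), ← hC, map_inv₀ (algebraMap k (RatFunc k)) b, div_eq_inv_mul]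
    rfl
  rcases hdec _ _ hcomp with h1 | h1
  · right
    rw [natDegree_C_mul (inv_ne_zero hb0)] at h1
    rw [hE]
    exact gen_mem_of_deg_one h1 hQ hQ0 hxx
  · left
    rw [natDegree_C_mul (inv_ne_zero ha0)] at h1
    rw [hE]
    exact X_mem_of_deg_one h1 hvd hv
end

open Polynomial
set_option linter.unusedSectionVars false
set_option linter.unusedSimpArgs false

def Good (k : Type) [Field k] (n : ℕ) : Prop :=
  ∃ (h g : k[X]) (e : ℕ), Pack k h g e ∧ h.natDegree = n ∧ GrpCond h e n ∧ Indec k h g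

section
variable {k : Type} [Field k]

theorem mult_of_eq {h w : k[X]} {a : k} {m : ℕ} (hh : h = (X - C a) ^ m * w) (hw : w.eval a ≠ 0) :
    h.rootMultiplicity a = m := by
  have hw0 : w ≠ 0 := by rintro rfl; simp at hw
  rw [hh, rootMultiplicity_mul (mul_ne_zero (pow_ne_zero _ (X_sub_C_ne_zero a)) hw0), rootMultiplicity_X_sub_C_pow,
    rootMultiplicity_eq_zero hw, add_zero]

theorem pack_helper {h g : k[X]} {m n : ℕ} (hm : h.Monic) (hc : IsCoprime h g) (hd : g.natDegree < h.natDegree)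
    (h0 : h.rootMultiplicity 0 = 2) (hmo : Odd m) (hmk : (m : k) ≠ 0) (h2 : (2 : k) ≠ 0)
    (hW : ∀ b, g.eval b ≠ 0 → (derivative h * g - h * derivative g).eval b = 0 → b = 0 ∨ h.rootMultiplicity b = m) :
    Pack k h g (2 * m) ∧ GrpCond h (2 * m) n := by
  have hpos : ∀ b, 0 < h.rootMultiplicity b → h.eval b = 0 := fun b hb => (rootMultiplicity_pos hm.ne_zero).mp hb
  have hgne : ∀ b, h.eval b = 0 → g.eval b ≠ 0 := by
    rintro b hb hgb
    obtain ⟨x, y, hxy⟩ := hc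
    have := congrArg (eval b) hxy
    simp [hb, hgb] at this
  have hmul : ∀ b, b ≠ 0 → h.eval b = 0 → h.rootMultiplicity b = 1 ∨ h.rootMultiplicity b = m := by
    intro b hb hhb
    by_cases hw : (derivative h * g - h * derivative g).eval b = 0
    · right; exact (hW b (hgne b hhb) hw).resolve_left hb
    · left
      have h1 : 0 < h.rootMultiplicity b := (rootMultiplicity_pos hm.ne_zero).mpr hhb
      have h3 : ¬ (1 < h.rootMultiplicity b) := by
        rw [one_lt_rootMultiplicity_iff_isRoot hm.ne_zero]
        rintro ⟨-, h4⟩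
        apply hw
        have h5 : (derivative h).eval b = 0 := h4
        simp [h5, hhb]
      omega
  refine ⟨⟨hm, hc, hd, ?_, ?_, even_two_mul _, ?_⟩, Or.inl ⟨m, rfl, hmo, 0, h0, ?_⟩⟩
  · intro b hgb hw
    rcases hW b hgb hw with rfl | h1
    · exact hpos _ (by omega)
    · exact hpos _ (by rw [h1]; exact hmo.pos)
  · push_cast; exact mul_ne_zero h2 hmk
  · intro a ha
    by_cases ha0 : a = 0
    · subst ha0; rw [h0]; exact dvd_mul_right _ _
    · rcases hmul a ha0 ha with h1 | h1 <;> rw [h1]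
      · exact one_dvd _
      · exact dvd_mul_left _ _
  · intro a ha0 ha
    rcases hmul a ha0 ha with h1 | h1 <;> rw [h1]
    · exact odd_one
    · exact hmo

variable [IsAlgClosed k] 

theorem good_pow {h : k[X]} {c : k} {b m n : ℕ} (hm : h.Monic) (hn : h.natDegree = n) (hc : h.eval c ≠ 0) (hd : b < n)
    (hb : Nat.Coprime b n)
    (h0 : h.rootMultiplicity 0 = 2) (hmo : Odd m) (hmk : (m : k) ≠ 0) (h2 : (2 : k) ≠ 0)
    (hW : ∀ y, y ≠ c → (derivative h * (X - C c) ^ b - h * derivative ((X - C c) ^ b)).eval y = 0 → y = 0 ∨ h.rootMultiplicity y = m) :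
    Good k n := by
  have hcop : IsCoprime h ((X - C c) ^ b) := by
    rw [coprime_iff_noroot]
    rintro y ⟨h1, h3⟩
    rw [eval_pow] at h3
    have h4 := eq_zero_of_pow_eq_zero h3
    simp [sub_eq_zero] at h4
    rw [h4] at h1; exact hc h1
  have hgd : ((X - C c) ^ b).natDegree = b := by rw [natDegree_pow, natDegree_X_sub_C, mul_one]
  have hp := pack_helper (n := n) hm hcop (by omega) h0 hmo hmk h2 (by
    intro y hy hw
    apply hW y ?_ hw
    rintro rfl
    by_cases hb0 : b = 0
    · subst hb0
      have h3 : n = 1 := by simpa using hb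
      have h4 := natDegree_le_of_dvd (pow_rootMultiplicity_dvd h 0) hm.ne_zero
      rw [natDegree_pow, natDegree_X_sub_C, h0] at h4
      omega
    · simp [hb0] at hy)
  exact ⟨h, _, _, hp.1, hn, hp.2, indec_pow hm hcop (by omega) (by rw [hn]; exact hb)⟩

/-- case C -/
theorem good_C (p : ℕ) (hp : p.Prime) (h5 : 5 ≤ p) [CharP k p] : Good k (p + 1) := by
  obtain ⟨q, rfl⟩ := Nat.exists_eq_add_of_le' (show 3 ≤ p by omega)
  have hodd : Odd (q + 3) := hp.odd_of_ne_two (by omega)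
  have hcast : ((q + 3 : ℕ) : k) = 0 := CharP.cast_eq_zero k _
  have hq : (q : k) = -3 := by push_cast at hcast; linear_combination hcast
  have ne : ∀ m : ℕ, 0 < m → m < q + 3 → (m : k) ≠ 0 := by
    intro m h1 h2 h3
    rw [CharP.cast_eq_zero_iff k (q + 3)] at h3
    exact absurd (Nat.le_of_dvd h1 h3) (by omega)
  have n2 : (2 : k) ≠ 0 := by exact_mod_cast ne 2 (by omega) (by omega)
  have n3 : (3 : k) ≠ 0 := by exact_mod_cast ne 3 (by omega) (by omega)
  have n4 : (4 : k) ≠ 0 := by exact_mod_cast ne 4 (by omega) (by omega)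
  have hmon : (X ^ 2 * (X - C 3) * (X - C 2) ^ (q + 1) : k[X]).Monic :=
    ((monic_X_pow 2).mul (monic_X_sub_C _)).mul ((monic_X_sub_C _).pow _)
  apply good_pow (h := X ^ 2 * (X - C 3) * (X - C 2) ^ (q + 1)) (c := -1) (b := 1) (m := q + 1) hmon
  · rw [Monic.natDegree_mul ((monic_X_pow 2).mul (monic_X_sub_C _)) ((monic_X_sub_C _).pow _),
      Monic.natDegree_mul (monic_X_pow 2) (monic_X_sub_C _), natDegree_pow, natDegree_pow, natDegree_X_sub_C, natDegree_X_sub_C, natDegree_X]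
    omega
  · simp only [eval_mul, eval_pow, eval_sub, eval_X, eval_C]
    refine mul_ne_zero (mul_ne_zero (by norm_num) ?_) (pow_ne_zero _ ?_)
    · intro h; apply n4; linear_combination -h
    · intro h; apply n3; linear_combination -h
  · omega
  · exact Nat.coprime_one_left _
  · apply mult_of_eq (w := (X - C 3) * (X - C 2) ^ (q + 1))
    · rw [C_0, sub_zero, mul_assoc]
    · simp only [eval_mul, eval_pow, eval_sub, eval_X, eval_C]
      exact mul_ne_zero (by simpa using n3) (pow_ne_zero _ (by simpa using n2))
  · obtain ⟨r, hr⟩ := hodd; exact ⟨r - 1, by omega⟩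
  · exact ne _ (by omega) (by omega)
  · exact n2
  · intro y _ hw
    by_cases hy : y = 2
    · right; subst hy
      apply mult_of_eq (w := X ^ 2 * (X - C 3))
      · ring
      · simp only [eval_mul, eval_pow, eval_sub, eval_X, eval_C]
        exact mul_ne_zero (pow_ne_zero _ n2) (by norm_num)
    · left
      have : (derivative (X ^ 2 * (X - C (3:k)) * (X - C 2) ^ (q + 1)) * (X - C (-1)) ^ 1 - (X ^ 2 * (X - C 3) * (X - C 2) ^ (q + 1)) * derivative ((X - C (-1)) ^ 1)).eval y
          = 12 * y * (y - 2) ^ q := by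
        simp only [derivative_mul, derivative_X_pow, derivative_X_sub_C_pow, derivative_sub, derivative_X, derivative_C, eval_mul, eval_add, eval_sub, eval_pow, eval_X, eval_C, eval_one, eval_zero, eval_natCast, pow_one, map_natCast]
        simp only [Nat.add_sub_cancel]
        push_cast
        rw [hq]
        ring
      rw [this] at hw
      have h12 : (12 : k) ≠ 0 := by
        have : (12 : k) = 3 * 4 := by norm_num
        rw [this]; exact mul_ne_zero n3 n4
      by_contra hy0
      exact mul_ne_zero (mul_ne_zero h12 hy0) (pow_ne_zero _ (sub_ne_zero.mpr hy)) hw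

/-- case E -/
theorem good_E [CharP k 3] : Good k 4 := by
  have hcast : ((3 : ℕ) : k) = 0 := CharP.cast_eq_zero k 3
  have h3 : (3 : k) = 0 := by exact_mod_cast hcast
  have hcop : IsCoprime (X ^ 4 : k[X]) ((X - C 1) ^ 1) := by
    rw [coprime_iff_noroot]
    rintro y ⟨h1, h2⟩
    simp [sub_eq_zero] at h1 h2
    rw [h1] at h2; exact zero_ne_one h2
  refine ⟨X ^ 4, (X - C 1) ^ 1, 4, ⟨monic_X_pow 4, hcop, ?_, ?_, ?_, by decide, ?_⟩, natDegree_X_pow 4, Or.inr ⟨rfl, rfl, rfl⟩, indec_pow (monic_X_pow 4) hcop (by simp) (by simp)⟩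
  · rw [pow_one, natDegree_X_sub_C, natDegree_X_pow]; omega
  · intro b _ hb
    have : (derivative ((X : k[X]) ^ 4) * (X - C 1) ^ 1 - X ^ 4 * derivative ((X - C 1) ^ 1)).eval b = - b ^ 3 := by
      simp only [derivative_X_pow, derivative_sub, derivative_X, derivative_C, eval_mul, eval_add, eval_sub, eval_pow, eval_X, eval_C, eval_one, eval_zero, pow_one]
      push_cast
      linear_combination (b ^ 4 - b ^ 3) * h3
    rw [this] at hb
    have : b = 0 := by simpa using hb
    simp [this]
  · intro h; push_cast at h
    apply one_ne_zero (α := k); linear_combination h - h3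
  · intro a ha
    have : a = 0 := by simpa using ha
    subst this
    rw [mult_of_eq (w := 1) (m := 4) (by simp) (by simp)]

/-- case D -/
theorem good_D (p : ℕ) (hp : p.Prime) (h3 : 3 ≤ p) [CharP k p] (P : k[X]) (n : ℕ)
    (hP : (P = 0 ∧ n = 2 * p + 1) ∨ ∃ d, P = X ^ (1 + d) * (X + C 1) ^ 2 ∧ n = p * (3 + d) + 1) : Good k n := by
  obtain ⟨q, rfl⟩ := Nat.exists_eq_add_of_le' h3
  have hodd : Odd (q + 3) := hp.odd_of_ne_two (by omega)
  have hcast : ((q + 3 : ℕ) : k) = 0 := CharP.cast_eq_zero k _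
  have hq : (q : k) = -3 := by push_cast at hcast; linear_combination hcast
  have ne : ∀ m : ℕ, 0 < m → m < q + 3 → (m : k) ≠ 0 := by
    intro m h1 h2 h3
    rw [CharP.cast_eq_zero_iff k (q + 3)] at h3
    exact absurd (Nat.le_of_dvd h1 h3) (by omega)
  have n2 : (2 : k) ≠ 0 := by exact_mod_cast ne 2 (by omega) (by omega)
  have hPR : ∃ R : k[X], P = X * (X + C 1) ^ 2 * R := by
    rcases hP with ⟨rfl, _⟩ | ⟨d, rfl, _⟩
    · exact ⟨0, by simp⟩
    · exact ⟨X ^ d, by ring⟩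
  obtain ⟨R, hR⟩ := hPR
  have m1 : (X ^ 2 * (X - C (-1)) ^ (2 * q + 5) : k[X]).Monic := (monic_X_pow 2).mul ((monic_X_sub_C _).pow _)
  have d1 : (X ^ 2 * (X - C (-1)) ^ (2 * q + 5) : k[X]).natDegree = 2 * q + 7 := by
    rw [Monic.natDegree_mul (monic_X_pow 2) ((monic_X_sub_C _).pow _), natDegree_pow, natDegree_pow, natDegree_X_sub_C, natDegree_X]
    omega
  set h : k[X] := X ^ 2 * (X - C (-1)) ^ (2 * q + 5) + (X - C 1) * P ^ (q + 3) with hh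
  have hmd : h.Monic ∧ h.natDegree = n := by
    rcases hP with ⟨rfl, rfl⟩ | ⟨d, rfl, rfl⟩
    · rw [hh, zero_pow (by omega), mul_zero, add_zero]
      exact ⟨m1, by rw [d1]; omega⟩
    · have m2 : ((X : k[X]) ^ (1 + d) * (X + C 1) ^ 2).Monic := (monic_X_pow _).mul ((monic_X_add_C _).pow _)
      have d2 : ((X : k[X]) ^ (1 + d) * (X + C 1) ^ 2).natDegree = 3 + d := by
        rw [Monic.natDegree_mul (monic_X_pow _) ((monic_X_add_C _).pow _), natDegree_pow, natDegree_pow, natDegree_X_add_C, natDegree_X]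
        omega
      have m3 : ((X - C 1) * ((X : k[X]) ^ (1 + d) * (X + C 1) ^ 2) ^ (q + 3)).Monic := (monic_X_sub_C _).mul (m2.pow _)
      have d3 : ((X - C 1) * ((X : k[X]) ^ (1 + d) * (X + C 1) ^ 2) ^ (q + 3)).natDegree = (q + 3) * (3 + d) + 1 := by
        rw [Monic.natDegree_mul (monic_X_sub_C _) (m2.pow _), natDegree_X_sub_C, natDegree_pow, d2]; omega
      have hlt : (X ^ 2 * (X - C (-1)) ^ (2 * q + 5) : k[X]).natDegree < ((X - C 1) * ((X : k[X]) ^ (1 + d) * (X + C 1) ^ 2) ^ (q + 3)).natDegree := by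
        rw [d1, d3]; nlinarith
      constructor
      · exact m3.add_of_right (degree_lt_degree hlt)
      · rw [hh, natDegree_add_eq_right_of_natDegree_lt hlt, d3]
  have hn1 : 1 < n := by
    rcases hP with ⟨_, rfl⟩ | ⟨d, _, rfl⟩
    · omega
    · nlinarith
  apply good_pow (h := h) (c := 1) (b := 1) (m := 2 * q + 5) hmd.1 hmd.2
  · simp only [hh, eval_add, eval_mul, eval_pow, eval_sub, eval_X, eval_C]
    simp only [one_pow, sub_self, zero_mul, add_zero, one_mul]
    apply pow_ne_zero
    intro h0; apply n2; linear_combination h0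
  · exact hn1
  · exact Nat.coprime_one_left _
  · apply mult_of_eq (w := (X - C (-1)) ^ (2 * q + 5) + (X - C 1) * X ^ (q + 1) * ((X + C 1) ^ 2 * R) ^ (q + 3))
    · rw [hh, hR, C_0]; simp only [mul_pow]; generalize (X + C (1:k)) = A; ring
    · simp
  · exact ⟨q + 2, by omega⟩
  · push_cast; rw [hq]; intro h0; apply one_ne_zero (α := k); linear_combination -h0
  · exact n2
  · intro y _ hw
    by_cases hy : y = -1
    · right; subst hy
      apply mult_of_eq (w := X ^ 2 + (X - C 1) * (X + C 1) * (X * R) ^ (q + 3))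
      · rw [hh, hR]; simp only [map_neg, sub_neg_eq_add, mul_pow]; generalize (X + C (1:k)) = A; ring
      · simp
    · left
      have : (derivative h * (X - C 1) ^ 1 - h * derivative ((X - C 1) ^ 1)).eval y
          = -2 * y * (y + 1) ^ (2 * q + 4) := by
        simp only [hh, derivative_add, derivative_pow_succ, derivative_mul, derivative_X_pow, derivative_X_sub_C_pow, derivative_sub, derivative_X, derivative_C, eval_mul, eval_add, eval_sub, eval_pow, eval_X, eval_C, eval_one, eval_zero, eval_natCast, pow_one, map_natCast]
        push_cast
        rw [hq]
        ring
      rw [this] at hw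
      by_contra hy0
      refine mul_ne_zero (mul_ne_zero (neg_ne_zero.mpr n2) hy0) (pow_ne_zero _ ?_) hw
      intro h0; apply hy; linear_combination h0

/-- case B -/
theorem good_B (p : ℕ) (hp : p.Prime) (h3 : 3 ≤ p) [CharP k p] (N : ℕ) (hN : 2 ≤ N) (hN0 : ¬ p ∣ N) (hN1 : ¬ p ∣ N - 1) : Good k (N + p) := by
  obtain ⟨M, rfl⟩ := Nat.exists_eq_add_of_le' (show 1 ≤ N by omega)
  rw [Nat.add_sub_cancel] at hN1
  have hcast : (p : k) = 0 := CharP.cast_eq_zero k _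
  have n2 : (2 : k) ≠ 0 := by
    intro h
    have h2 : ((2 : ℕ) : k) = 0 := by exact_mod_cast h
    rw [CharP.cast_eq_zero_iff k p] at h2
    exact absurd (Nat.le_of_dvd (by omega) h2) (by omega)
  have nM : (M : k) ≠ 0 := by rwa [Ne, CharP.cast_eq_zero_iff k p]
  have nN : (M : k) + 1 ≠ 0 := by
    have : ((M + 1 : ℕ) : k) ≠ 0 := by rwa [Ne, CharP.cast_eq_zero_iff k p]
    exact_mod_cast this
  let c : k := (-1) ^ (M + 1) / ((M + 1) * M)
  let D : k := ((M + 1) * M : k)⁻¹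
  have hD : D * ((M + 1) * M) = 1 := inv_mul_cancel₀ (mul_ne_zero nN nM)
  have hc : c = (-1) ^ (M + 1) * D := div_eq_mul_inv _ _
  set r : k[X] := C (D * (M + 1)) * X - C D with hr
  set h : k[X] := (X ^ p - C c) * (X - C 1) ^ (M + 1) - r with hh
  have mm : ((X ^ p - C c) * (X - C 1) ^ (M + 1) : k[X]).Monic := (monic_X_pow_sub_C c (by omega)).mul ((monic_X_sub_C _).pow _)
  have dd : ((X ^ p - C c) * (X - C 1) ^ (M + 1) : k[X]).natDegree = M + 1 + p := by
    rw [Monic.natDegree_mul (monic_X_pow_sub_C c (by omega)) ((monic_X_sub_C _).pow _), natDegree_pow, natDegree_X_sub_C, natDegree_X_pow_sub_C]; omega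
  have dr : r.natDegree ≤ 1 := by
    rw [hr, natDegree_sub_C]; exact (natDegree_C_mul_le _ _).trans natDegree_X_le
  have hlt : r.natDegree < ((X ^ p - C c) * (X - C 1) ^ (M + 1) : k[X]).natDegree := by omega
  have hev : ∀ y, h.eval y = (y ^ p - c) * (y - 1) ^ (M + 1) - (D * (M + 1) * y - D) := by
    intro y; simp [hh, hr]
  have hdh : ∀ y, (derivative h).eval y = (y ^ p - c) * ((M + 1) * (y - 1) ^ M) - D * (M + 1) := by
    intro y
    simp only [hh, hr, derivative_sub, derivative_mul, derivative_X_pow, derivative_X_sub_C_pow, derivative_C, derivative_X, eval_sub, eval_mul, eval_pow, eval_X, eval_C, eval_zero, eval_one, eval_add, hcast, map_zero, map_natCast, eval_natCast]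
    simp only [Nat.add_sub_cancel]
    push_cast
    ring
  have hWv : ∀ y, (derivative h * (X - C 1) ^ (M + 1) - h * derivative ((X - C 1) ^ (M + 1))).eval y = y * (y - 1) ^ M := by
    intro y
    rw [eval_sub, eval_mul, eval_mul, hdh, hev, derivative_X_sub_C_pow]
    simp only [eval_sub, eval_mul, eval_pow, eval_X, eval_C, map_natCast, eval_natCast, Nat.add_sub_cancel]
    push_cast
    linear_combination (y * (y - 1) ^ M) * hD
  have h00 : h.eval 0 = 0 := by
    rw [hev, hc, zero_pow hp.ne_zero, zero_sub, zero_sub, mul_zero, zero_sub, sub_neg_eq_add]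
    have : ((-1 : k) ^ (M + 1)) * (-1) ^ (M + 1) = 1 := by rw [← mul_pow]; simp
    linear_combination -D * this
  have hm : h.Monic := mm.sub_of_left (degree_lt_degree hlt)
  apply good_pow (h := h) (c := 1) (b := M + 1) (m := 1) hm
  · rw [hh, natDegree_sub_eq_left_of_natDegree_lt hlt, dd]
  · rw [hev]
    intro h0
    apply one_ne_zero (α := k)
    simp at h0
    have : D * M = 0 := by linear_combination -h0
    linear_combination -hD + (M + 1) * this
  · omega
  · rw [Nat.coprime_self_add_right]
    exact ((Nat.Prime.coprime_iff_not_dvd hp).mpr hN0).symm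
  · -- multiplicity 2 at 0
    have hd0 : (derivative h).eval 0 = 0 := by
      have := hWv 0
      rw [eval_sub, eval_mul, eval_mul, h00, zero_mul, zero_mul, sub_zero] at this
      refine (mul_eq_zero.mp this).resolve_right ?_
      simp
    have h1 : 1 < h.rootMultiplicity 0 := (one_lt_rootMultiplicity_iff_isRoot hm.ne_zero).mpr ⟨h00, hd0⟩
    have h4 : ¬ 2 < h.rootMultiplicity 0 := by
      intro h2
      obtain ⟨w, hw⟩ := (pow_dvd_pow (X - C (0:k)) h2).trans (pow_rootMultiplicity_dvd h 0)
      rw [C_0, sub_zero] at hw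
      have h5 : X ^ 2 ∣ (X * (X - C 1) ^ M : k[X]) := by
        have : (X * (X - C 1) ^ M : k[X]) = (derivative h * (X - C 1) ^ (M + 1) - h * derivative ((X - C 1) ^ (M + 1))) := by
          have : Infinite k := IsAlgClosed.instInfinite
          apply Polynomial.funext
          intro y; rw [hWv]; simp
        rw [this, hw, derivative_mul, derivative_X_pow]
        apply dvd_sub
        · refine Dvd.dvd.mul_right (dvd_add ?_ ?_) _
          · exact Dvd.dvd.mul_right (Dvd.dvd.mul_left (by simp) _) _
          · exact Dvd.dvd.mul_right (pow_dvd_pow _ (by omega)) _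
        · exact Dvd.dvd.mul_right (Dvd.dvd.mul_right (pow_dvd_pow _ (by omega)) _) _
      rw [pow_two, mul_dvd_mul_iff_left X_ne_zero, X_dvd_iff, coeff_zero_eq_eval_zero] at h5
      simp at h5
    omega
  · exact odd_one
  · simp
  · exact n2
  · intro y hy hw
    left
    rw [hWv] at hw
    exact (mul_eq_zero.mp hw).resolve_right (pow_ne_zero _ (sub_ne_zero.mpr hy))
end

open Polynomial
set_option linter.unusedSectionVars false
set_option linter.unusedSimpArgs false

section
variable {k : Type} [Field k]

theorem decA (p : ℕ) (hp : p.Prime) (h3 : 3 ≤ p) [CharP k p] (A : k[X]) (hA1 : A.coeff 1 ≠ 0)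
    (hA : p ∣ A.natDegree → A = X ^ A.natDegree + X ^ (A.natDegree - 2) + X) (P u : k[X])
    (hPu : X ^ 2 + expand k p A = P.comp u) : P.natDegree = 1 ∨ u.natDegree = 1 := by
  have : Fact p.Prime := ⟨hp⟩
  have hcast : (p : k) = 0 := CharP.cast_eq_zero k _
  have hcastX : (p : k[X]) = 0 := CharP.cast_eq_zero k[X] _
  have n2 : (2 : k) ≠ 0 := by
    intro h
    have h2 : ((2 : ℕ) : k) = 0 := by exact_mod_cast h
    rw [CharP.cast_eq_zero_iff k p] at h2
    exact absurd (Nat.le_of_dvd (by omega) h2) (by omega)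
  set j := A.natDegree with hj
  have hj1 : 1 ≤ j := le_natDegree_of_ne_zero hA1
  have hdexp : ∀ f : k[X], derivative (expand k p f) = 0 := by
    intro f; rw [derivative_expand, hcastX, zero_mul, mul_zero]
  have hnd : (X ^ 2 + expand k p A).natDegree = j * p := by
    rw [natDegree_add_eq_right_of_natDegree_lt, natDegree_expand]
    rw [natDegree_expand, natDegree_X_pow]; nlinarith
  have hn : j * p = P.natDegree * u.natDegree := by rw [← hnd, hPu, natDegree_comp]
  have hpos : 0 < j * p := by positivity
  by_contra hcon
  push Not at hcon
  have hP0 : P.natDegree ≠ 0 := by intro h; rw [h] at hn; omega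
  have hu0 : u.natDegree ≠ 0 := by intro h; rw [h] at hn; omega
  have hP2 : 2 ≤ P.natDegree := by omega
  have hu2 : 2 ≤ u.natDegree := by omega
  have hder : C 2 * X = derivative u * (derivative P).comp u := by
    rw [← derivative_comp, ← hPu, derivative_add, hdexp, derivative_X_pow, add_zero]
    simp
  have h2X : (C 2 * X : k[X]) ≠ 0 := mul_ne_zero (C_ne_zero.mpr n2) X_ne_zero
  have hd1 : 1 = (derivative u).natDegree + (derivative P).natDegree * u.natDegree := by
    rw [← natDegree_comp, ← natDegree_mul (left_ne_zero_of_mul (hder ▸ h2X)) (right_ne_zero_of_mul (hder ▸ h2X)), ← hder, natDegree_C_mul_X _ n2]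
  have hPd : (derivative P).natDegree = 0 := by
    by_contra h
    have : 1 ≤ (derivative P).natDegree := by omega
    nlinarith
  obtain ⟨a, ha⟩ := natDegree_eq_zero.mp hPd
  rw [← ha, C_comp] at hder
  have ha0 : a ≠ 0 := by rintro rfl; rw [C_0, mul_zero] at hder; exact h2X hder
  have hu' : derivative u = C (2 * a⁻¹) * X := by
    have : derivative u * C a * C a⁻¹ = C 2 * X * C a⁻¹ := by rw [hder]
    rw [mul_assoc, ← C_mul, mul_inv_cancel₀ ha0, C_1, mul_one] at this
    rw [this, C_mul]; ring
  obtain ⟨B, hB⟩ : ∃ B, P = C a * X + expand k p B := by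
    refine ⟨contract p (P - C a * X), ?_⟩
    rw [expand_contract p _ hp.ne_zero]
    · ring
    · rw [derivative_sub, ← ha]; simp
  obtain ⟨D, hD⟩ : ∃ D, u = C a⁻¹ * X ^ 2 + expand k p D := by
    refine ⟨contract p (u - C a⁻¹ * X ^ 2), ?_⟩
    rw [expand_contract p _ hp.ne_zero]
    · ring
    · rw [derivative_sub, hu', derivative_C_mul_X_sq, mul_comm 2, sub_self]
  set v := u.map (frobenius k p) with hv
  have hvp : u ^ p = expand k p v := by rw [hv, ← map_expand, map_frobenius_expand]
  have hAeq : A = C a * D + B.comp v := by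
    apply expand_injective hp.pos
    have h1 : X ^ 2 + expand k p A = C a * u + B.comp (u ^ p) := by
      rw [hPu, hB, add_comp, mul_comp, C_comp, X_comp, expand_eq_comp_X_pow, comp_assoc, X_pow_comp]
    have h2 : C a * u = X ^ 2 + C a * expand k p D := by
      conv_lhs => rw [hD]
      rw [mul_add, ← mul_assoc, ← C_mul, mul_inv_cancel₀ ha0, C_1, one_mul]
    rw [h2, hvp] at h1
    have h4 : B.comp (expand k p v) = expand k p (B.comp v) := by
      rw [expand_eq_comp_X_pow, expand_eq_comp_X_pow, comp_assoc]
    rw [h4] at h1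
    rw [map_add, map_mul, expand_C]
    linear_combination h1
  set ρ : k := (2 * a⁻¹) ^ p with hρ
  have hρ0 : ρ ≠ 0 := pow_ne_zero _ (mul_ne_zero n2 (inv_ne_zero ha0))
  have hv' : derivative v = C ρ * X := by
    rw [hv, derivative_map, hu', Polynomial.map_mul, map_C, map_X, frobenius_def]
  have hA' : derivative A - C a * derivative D = C ρ * X * (derivative B).comp v := by
    conv_lhs => rw [hAeq]
    rw [derivative_add, derivative_comp, hv', derivative_mul, derivative_C]; ring
  have hvd : v.natDegree = u.natDegree := natDegree_map_eq_of_injective (frobenius k p).injective u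
  have hB0 : B.natDegree ≠ 0 := by
    intro h
    have h1 : P.natDegree ≤ 1 := by
      rw [hB]
      refine (natDegree_add_le _ _).trans (max_le ((natDegree_C_mul_le _ _).trans natDegree_X_le) ?_)
      rw [natDegree_expand, h]; omega
    omega
  have hPdeg : P.natDegree = B.natDegree * p := by
    rw [hB, natDegree_add_eq_right_of_natDegree_lt, natDegree_expand]
    rw [natDegree_expand, natDegree_C_mul_X _ ha0]
    have : 1 ≤ B.natDegree := by omega
    nlinarith
  have hjd : j = B.natDegree * u.natDegree := by
    rw [hPdeg] at hn
    apply Nat.eq_of_mul_eq_mul_right hp.pos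
    rw [hn]; ring
  by_cases hc : D.natDegree = 0
  · have hD' : derivative D = 0 := derivative_of_natDegree_zero hc
    rw [hD', mul_zero, sub_zero] at hA'
    have := congrArg (fun q => coeff q 0) hA'
    simp only [coeff_derivative, mul_coeff_zero, coeff_X_zero, mul_zero, zero_mul] at this
    apply hA1
    simpa using this
  have hud : u.natDegree = D.natDegree * p := by
    rw [hD, natDegree_add_eq_right_of_natDegree_lt, natDegree_expand]
    rw [natDegree_expand, natDegree_C_mul_X_pow _ _ (inv_ne_zero ha0)]
    have : 1 ≤ D.natDegree := by omega
    nlinarith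
  have hpd : p ∣ u.natDegree := ⟨D.natDegree, by rw [hud, mul_comm]⟩
  have hdj : u.natDegree ∣ j := ⟨B.natDegree, by rw [hjd, mul_comm]⟩
  have hpj : p ∣ j := hpd.trans hdj
  have hjk : (j : k) = 0 := (CharP.cast_eq_zero_iff k p j).mpr hpj
  have hj3D : 3 * D.natDegree ≤ j := by
    rw [hjd, hud]
    have : 1 ≤ B.natDegree := by omega
    calc 3 * D.natDegree ≤ p * D.natDegree := Nat.mul_le_mul_right _ h3
      _ = 1 * (D.natDegree * p) := by ring
      _ ≤ _ := Nat.mul_le_mul_right _ this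
  have hj3 : 3 ≤ j := by omega
  have hdA : derivative A = C (-2) * X ^ (j - 3) + 1 := by
    rw [hA hpj, derivative_add, derivative_add, derivative_X_pow, derivative_X_pow, derivative_X, hjk, Nat.cast_sub (by omega), hjk]
    have : j - 2 - 1 = j - 3 := by omega
    rw [this]; simp
  have hDd : (C a * derivative D).natDegree ≤ D.natDegree - 1 :=
    (natDegree_C_mul_le _ _).trans (natDegree_derivative_le D)
  have hRd : derivative B ≠ 0 → (C ρ * X * (derivative B).comp v).natDegree = 1 + (derivative B).natDegree * u.natDegree := by
    intro hB'
    have : (derivative B).comp v ≠ 0 := by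
      intro h0
      rw [comp_eq_zero_iff] at h0
      rcases h0 with h0 | ⟨_, h0⟩
      · exact hB' h0
      · rw [h0, natDegree_C] at hvd; omega
    rw [natDegree_mul (mul_ne_zero (C_ne_zero.mpr hρ0) X_ne_zero) this, natDegree_C_mul_X _ hρ0, natDegree_comp, hvd]
  by_cases hj4 : j = 3
  · have hB1 : B.natDegree = 1 := by
      have h1 : 3 ≤ u.natDegree := by
        rw [hud]
        have : 1 ≤ D.natDegree := by omega
        nlinarith
      have h2 : ¬ 2 ≤ B.natDegree := by intro h; nlinarith
      omega
    obtain ⟨b, hb, c, hbc⟩ := natDegree_eq_one.mp hB1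
    have hB' : derivative B ≠ 0 := by
      rw [← hbc]; simpa using hb
    have h1 := hRd hB'
    rw [← hA', hdA, hj4] at h1
    have h2 : (C (-2) * X ^ (3 - 3) + 1 - C a * derivative D : k[X]).natDegree ≤ 0 := by
      refine (natDegree_sub_le _ _).trans (max_le ?_ (by omega))
      have : (C (-2) * X ^ (3 - 3) + 1 : k[X]) = C (-2 + 1) := by simp
      rw [this, natDegree_C]
    omega
  · have hL : (C (-2) * X ^ (j - 3) + 1 - C a * derivative D : k[X]).natDegree = j - 3 := by
      have h1 : (C (-2) * X ^ (j - 3) : k[X]).natDegree = j - 3 := natDegree_C_mul_X_pow _ _ (neg_ne_zero.mpr n2)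
      rw [add_sub_assoc, natDegree_add_eq_left_of_natDegree_lt, h1]
      rw [h1]
      refine (natDegree_sub_le _ _).trans_lt (max_lt ?_ ?_)
      · rw [natDegree_one]; omega
      · omega
    rw [← hdA, hA'] at hL
    have hB' : derivative B ≠ 0 := by
      intro h0; rw [h0] at hL; simp at hL; omega
    rw [hRd hB'] at hL
    have h4 : j = 4 + (derivative B).natDegree * u.natDegree := by omega
    have h5 : u.natDegree ∣ 4 := (Nat.dvd_add_left (dvd_mul_left _ _)).mp (h4 ▸ hdj)
    have h6 : p ∣ 2 ^ 2 := hpd.trans h5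
    have h7 := Nat.le_of_dvd (by omega) (hp.dvd_of_dvd_pow h6)
    omega

variable [IsAlgClosed k]

/-- case A -/
theorem good_A_aux (p : ℕ) (hp : p.Prime) (h3 : 3 ≤ p) [CharP k p] (A : k[X]) (hm : A.Monic) (hA0 : A.coeff 0 = 0) (hA1 : A.coeff 1 ≠ 0)
    (hA : p ∣ A.natDegree → A = X ^ A.natDegree + X ^ (A.natDegree - 2) + X) : Good k (p * A.natDegree) := by
  have hcastX : (p : k[X]) = 0 := CharP.cast_eq_zero k[X] _
  have n2 : (2 : k) ≠ 0 := by
    intro h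
    have h2 : ((2 : ℕ) : k) = 0 := by exact_mod_cast h
    rw [CharP.cast_eq_zero_iff k p] at h2
    exact absurd (Nat.le_of_dvd (by omega) h2) (by omega)
  have hj1 : 1 ≤ A.natDegree := le_natDegree_of_ne_zero hA1
  have hlt : (X ^ 2 : k[X]).natDegree < (expand k p A).natDegree := by
    rw [natDegree_expand, natDegree_X_pow]; nlinarith
  have hnd : (X ^ 2 + expand k p A).natDegree = p * A.natDegree := by
    rw [natDegree_add_eq_right_of_natDegree_lt hlt, natDegree_expand, mul_comm]
  have hmon : (X ^ 2 + expand k p A).Monic := ((monic_expand_iff hp.pos).mpr hm).add_of_right (degree_lt_degree hlt)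
  obtain ⟨A1, hA1'⟩ := X_dvd_iff.mpr hA0
  have hder : derivative (X ^ 2 + expand k p A) = C 2 * X := by
    rw [derivative_add, derivative_expand, hcastX, zero_mul, mul_zero, derivative_X_pow]; simp
  have hpk := pack_helper (h := X ^ 2 + expand k p A) (g := 1) (m := 1) (n := p * A.natDegree) hmon isCoprime_one_right (by
      rw [natDegree_one, hnd]; positivity) (by
      apply mult_of_eq (w := 1 + X ^ (p - 2) * expand k p A1)
      · rw [hA1', map_mul, expand_X, C_0, sub_zero, mul_add, ← mul_assoc, ← pow_add, mul_one]
        congr 4; omega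
      · rw [eval_add, eval_mul, eval_pow, eval_X, zero_pow (by omega)]; simp) odd_one (by simp) n2 (by
      intro b _ hb
      left
      rw [hder] at hb
      simpa [n2] using hb)
  exact ⟨_, _, _, hpk.1, hnd, hpk.2, indec_one hmon (by rw [hnd]; positivity) (fun P u hPu => decA p hp h3 A hA1 hA P u hPu)⟩

theorem good_A (p : ℕ) (hp : p.Prime) (h3 : 3 ≤ p) [CharP k p] (j : ℕ) (hj : 1 ≤ j) : Good k (p * j) := by
  by_cases hpj : p ∣ j
  · have hj3 : 3 ≤ j := h3.trans (Nat.le_of_dvd (by omega) hpj)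
    have hlt : (X ^ (j - 2) + X : k[X]).natDegree < j := by
      refine (natDegree_add_le _ _).trans_lt (max_lt ?_ ?_)
      · rw [natDegree_X_pow]; omega
      · rw [natDegree_X]; omega
    have hlt' : (X ^ (j - 2) + X : k[X]).natDegree < (X ^ j : k[X]).natDegree := by rwa [natDegree_X_pow]
    have hd : (X ^ j + X ^ (j - 2) + X : k[X]).natDegree = j := by
      rw [add_assoc, natDegree_add_eq_left_of_natDegree_lt hlt', natDegree_X_pow]
    have hm : (X ^ j + X ^ (j - 2) + X : k[X]).Monic := by
      rw [add_assoc]; exact (monic_X_pow j).add_of_left (degree_lt_degree hlt')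
    have := good_A_aux p hp h3 _ hm (by
      rw [coeff_add, coeff_add, coeff_X_pow, coeff_X_pow, coeff_X_zero, if_neg (by omega), if_neg (by omega)]; simp) (by
      have n2 : (1 + 1 : k) ≠ 0 := by
        intro h
        have h2 : ((2 : ℕ) : k) = 0 := by push_cast; linear_combination h
        rw [CharP.cast_eq_zero_iff k p] at h2
        exact absurd (Nat.le_of_dvd (by omega) h2) (by omega)
      rw [coeff_add, coeff_add, coeff_X_pow, coeff_X_pow, coeff_X_one, if_neg (by omega)]
      split_ifs
      · rwa [zero_add]
      · simp) (by intro _; rw [hd])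
    rwa [hd] at this
  · by_cases hj1 : j = 1
    · subst hj1
      have := good_A_aux (k := k) p hp h3 X monic_X (by simp) (by simp) (by rw [natDegree_X]; intro h; exact absurd h hpj)
      rwa [natDegree_X] at this
    · have hlt : (X : k[X]).natDegree < (X ^ j : k[X]).natDegree := by rw [natDegree_X_pow, natDegree_X]; omega
      have hd : (X ^ j + X : k[X]).natDegree = j := by
        rw [natDegree_add_eq_left_of_natDegree_lt hlt, natDegree_X_pow]
      have hm : (X ^ j + X : k[X]).Monic := (monic_X_pow j).add_of_left (degree_lt_degree hlt)
      have := good_A_aux p hp h3 _ hm (by simp [coeff_X_pow]; omega) (by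
        rw [coeff_add, coeff_X_pow, coeff_X_one, if_neg (by omega)]; simp) (by rw [hd]; intro h; exact absurd h hpj)
      rwa [hd] at this

theorem good_all (p : ℕ) (hp : p.Prime) (hodd : Odd p) (n : ℕ) (hn : p ≤ n) [CharP k p] : Good k n := by
  have h3 : 3 ≤ p := by
    have := hp.two_le
    rcases hodd with ⟨r, hr⟩; omega
  by_cases h0 : p ∣ n
  · obtain ⟨j, rfl⟩ := h0
    apply good_A p hp h3 j
    by_contra h; have : j = 0 := by omega
    subst this; omega
  by_cases h1 : p ∣ n - 1
  · obtain ⟨i, hi⟩ := h1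
    have hn' : n = p * i + 1 := by omega
    match i, hn' with
    | 0, h => omega
    | 1, h =>
      by_cases h5 : 5 ≤ p
      · rw [h, mul_one]; exact good_C p hp h5
      · have : p = 3 := by
          have : p ≠ 4 := by rintro rfl; revert hp; decide
          omega
        subst this
        rw [h]; exact good_E
    | 2, h => exact good_D p hp h3 0 n (Or.inl ⟨rfl, by rw [h, mul_comm]⟩)
    | (d + 3), h => exact good_D p hp h3 _ n (Or.inr ⟨d, rfl, by rw [h, add_comm 3 d]⟩)
  · obtain ⟨N, rfl⟩ := Nat.exists_eq_add_of_le' hn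
    have e0 : ¬ p ∣ N := fun h => h0 (h.add (dvd_refl p))
    have hN0 : N ≠ 0 := by rintro rfl; exact e0 (dvd_zero p)
    have hN1 : N ≠ 1 := by
      rintro rfl; apply h1; simp
    apply good_B p hp h3 N (by omega) e0
    intro h
    apply h1
    have : N + p - 1 = (N - 1) + p := by omega
    rw [this]; exact h.add (dvd_refl p)
end

/-- Abhyankar's alternating group conjecture for odd `p` (proved): for an odd
prime `p`, an integer `n ≥ p`, and an algebraically closed field `k` of
characteristic `p`, there is a finite Galois extension `L` of `k(X)` with
Galois group isomorphic to the alternating group `A_n`, in which every nonzero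
prime ideal of `k[X]` is unramified: for every nonzero prime `P` of `k[X]` and
every prime `Q` of the integral closure of `k[X]` in `L` lying over `P`, the
ramification index of `Q` over `P` is `1`. -/
theorem stmt_19 (p : ℕ) (hp : p.Prime) (hodd : Odd p)
    (n : ℕ) (hn : p ≤ n)
    (k : Type) [Field k] [IsAlgClosed k] [CharP k p] :
    ∃ (L : Type) (_ : Field L) (_ : Algebra (RatFunc k) L)
      (_ : Algebra (Polynomial k) L)
      (_ : IsScalarTower (Polynomial k) (RatFunc k) L),
      FiniteDimensional (RatFunc k) L ∧ IsGalois (RatFunc k) L ∧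
      Nonempty ((L ≃ₐ[RatFunc k] L) ≃* alternatingGroup (Fin n)) ∧
      ∀ P : Ideal (Polynomial k), P.IsPrime → P ≠ ⊥ →
        ∀ Q : Ideal (integralClosure (Polynomial k) L), Q.IsPrime →
          Q.comap (algebraMap (Polynomial k) (integralClosure (Polynomial k) L)) = P →
          Ideal.ramificationIdx' P Q = 1 := by
  obtain ⟨h, g, e, hP, hd, hg, hI⟩ := good_all (k := k) p hp hodd n hn
  exact main_of_pack hP hd hg (hp.two_le.trans hn) hI
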